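/- For every f ∈ L^∞(ℝ^D) and every pair of indices j, k ∈ {1,…,D}, there exists a locally integrable function π on ℝ^D of bounded mean oscillation solving -Δπ = ∂_j∂_k f in the sense of distributions (i.e., -∫ π Δφ dx = ∫ f ∂_j∂_k φ dx for every Schwartz test function φ), and there exists a constant C depending only on D such that ‖π‖_BMO ≤ C ‖f‖_{L^∞}. Moreover π is unique in BMO up to an additive constant: any two BMO distributional solutions differ by a constant almost everywhere. -/

import Mathlib

/-!
Everything rests on two elementary facts, which replace the theory of singular integrals.

*The `L²` bound.* For Schwartz `φ`, integrating by parts twice gives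
`‖Δφ‖₂² = ∑ₐ ∑_b ‖∂ₐ∂_bφ‖₂²`, hence `‖∂_j∂_kφ‖₂ ≤ ‖Δφ‖₂`. By the Riesz representation theorem,
square integrable data `g` have a solution `u` with `‖u‖₂ ≤ ‖g‖₂` (`exists_L2_sol`).

*Mollification in the scale variable.* Take a mollifier `η` and a bump `ψ` with `∇ψ(x) = -η(x) x`.
Then `∂_r (r⁻ᴰ η(x/r)) = r⁻ᴰ⁻¹ (Δψ)(x/r)`, so the derivative in `r` of the mollification of a
solution at scale `r` is an integral of the data alone (`MollPair.hasDerivAt_moll`). Where the data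
vanish this is the mean value property. Integrating from scale `R/2` to infinity shows that an `L²`
solution with data bounded by `M` and vanishing on `B(c,R)` is within `C M ρ/R` of a constant on
`B(c,ρ)` (`MollPair.far_estimate`). The same mean value property, applied at large scales, gives
the Liouville theorem for BMO functions (`MollPair.liouville`) and therefore uniqueness.

For bounded `L²` data the BMO estimate follows by splitting the data at `B(c,2ρ)`: the near part is
handled by the `L²` bound and the far part by `far_estimate` (`exists_meanClose`). For general
bounded data `f`, solve with `f` cut off to `B(0,n)` and subtract the mean over `B(0,1)`. By
`far_estimate` these solutions are Cauchy, uniformly on each ball (`exists_close`). The uniform BMO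
bound gives a uniform bound in a polynomially weighted `L¹` space (`exists_weighted`), which makes
the tails negligible against Schwartz functions, so the limit solves the equation
(`tendsto_integral_of_close`, `exists_sol`). In dimension `0` there are no indices `j`, `k`.
-/

open MeasureTheory Real Set

noncomputable section

/-- `ℝ^D` as a Euclidean space. -/
abbrev Spc (D : ℕ) := EuclideanSpace ℝ (Fin D)

/-- `ℂ^D` as a (complex) Euclidean space. -/
abbrev CSpc (D : ℕ) := EuclideanSpace ℂ (Fin D)

variable {D : ℕ}

/-- The heat kernel `G_λ(x,t) = (4πλt)^{-D/2} exp(-|x|²/(4λt))`. -/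
def heatK (D : ℕ) (lam : ℝ) (x : Spc D) (t : ℝ) : ℝ :=
  (4 * π * lam * t) ^ (-(D : ℝ) / 2) * Real.exp (-‖x‖ ^ 2 / (4 * lam * t))

/-- Spatial partial derivative in the `j`-th coordinate direction. -/
def pd (j : Fin D) (f : Spc D → ℝ) (x : Spc D) : ℝ :=
  fderiv ℝ f x (EuclideanSpace.single j 1)

/-- Laplacian. -/
def lap (f : Spc D → ℝ) (x : Spc D) : ℝ := ∑ j, pd j (fun y => pd j f y) x

/-- Membership in `L^∞` for a (bounded, measurable) vector field. -/
def MemLinf (f : Spc D → Spc D) : Prop :=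
  AEStronglyMeasurable f volume ∧ BddAbove (Set.range fun x => ‖f x‖)

/-- The `L^∞`-norm (supremum norm) of a vector field. -/
def supN (f : Spc D → Spc D) : ℝ := ⨆ x, ‖f x‖

/-- The sup norm in space of a time slice of a time dependent field. -/
def slN (F : ℝ → Spc D → Spc D) (t : ℝ) : ℝ := ⨆ x, ‖F t x‖

/-- Sup norm over the space-time region `(0,T) × ℝ^D`. -/
def stSup (T : ℝ) (F : ℝ → Spc D → Spc D) : ℝ :=
  ⨆ t ∈ Set.Ioo (0 : ℝ) T, ⨆ x, ‖F t x‖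

/-- Sup norm over the space-time region `[0,T) × ℝ^D`. -/
def stSupIco (T : ℝ) (F : ℝ → Spc D → Spc D) : ℝ :=
  ⨆ t ∈ Set.Ico (0 : ℝ) T, ⨆ x, ‖F t x‖

/-- The set of mean oscillations of `f` over all Euclidean balls. -/
def oscSet (f : Spc D → ℝ) : Set ℝ :=
  {v | ∃ (c : Spc D) (r : ℝ), 0 < r ∧
    v = ⨍ y in Metric.ball c r, |f y - ⨍ z in Metric.ball c r, f z|}

/-- The BMO seminorm of `f`. -/
def bmoNorm (f : Spc D → ℝ) : ℝ := sSup (oscSet f)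

/-- `f` is of bounded mean oscillation. -/
def IsBMO (f : Spc D → ℝ) : Prop :=
  LocallyIntegrable f volume ∧ BddAbove (oscSet f)

/-- Divergence-free in the sense of distributions. -/
def DivFree (F : Spc D → Spc D) : Prop :=
  ∀ φ : SchwartzMap (Spc D) ℝ, ∑ j, ∫ x, F x j * pd j (⇑φ) x = 0

/-- `p` solves `Δ p = -∂_j∂_k g_{jk}` (summed over `j,k`) in the sense of distributions. -/
def SolvesPoisson (D : ℕ) (p : Spc D → ℝ) (g : Fin D → Fin D → Spc D → ℝ) : Prop :=
  ∀ φ : SchwartzMap (Spc D) ℝ,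
    ∫ x, p x * lap (⇑φ) x
      = - ∑ j, ∑ k, ∫ x, g j k x * pd j (fun y => pd k (⇑φ) y) x

/-- Mild solution of the MHD system with viscosity `ν`, diffusivity `μ`, data `U₀, B₀`;
the Duhamel identities hold at every time in `I`. -/
def MildMHD (D : ℕ) (ν μ : ℝ) (U₀ B₀ : Spc D → Spc D) (I : Set ℝ)
    (U B : ℝ → Spc D → Spc D) : Prop :=
  ∃ P : ℝ → Spc D → ℝ,
    (∀ t ∈ I, IsBMO (P t) ∧
      SolvesPoisson D (P t)
        (fun j k x => U t x j * U t x k - B t x j * B t x k)) ∧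
    (∀ t ∈ I, BddAbove (Set.range fun x => ‖U t x‖) ∧
      BddAbove (Set.range fun x => ‖B t x‖)) ∧
    (∀ t ∈ I, ∀ (x : Spc D) (k : Fin D),
      U t x k = (∫ w, heatK D ν (x - w) t * U₀ w k)
        - (∫ s in Set.Ioo (0 : ℝ) t, ∫ w,
            ∑ j, pd j (fun y => heatK D ν y (t - s)) (x - w)
              * (U s w j * U s w k - B s w j * B s w k))
        - (∫ s in Set.Ioo (0 : ℝ) t, ∫ w,
            pd k (fun y => heatK D ν y (t - s)) (x - w) * P s w) ∧
      B t x k = (∫ w, heatK D μ (x - w) t * B₀ w k)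
        - (∫ s in Set.Ioo (0 : ℝ) t, ∫ w,
            ∑ j, pd j (fun y => heatK D μ y (t - s)) (x - w)
              * (U s w j * B s w k - B s w j * U s w k)))

/-- The approximation scheme for the MHD system. -/
def ApproxMHD (D : ℕ) (ν μ : ℝ) (U₀ B₀ : Spc D → Spc D)
    (U B : ℕ → ℝ → Spc D → Spc D) (P : ℕ → ℝ → Spc D → ℝ) : Prop :=
  (∀ t x, U 0 t x = 0) ∧ (∀ t x, B 0 t x = 0) ∧ (∀ t x, P 0 t x = 0) ∧
  (∀ n : ℕ, ∀ x, U (n + 1) 0 x = U₀ x ∧ B (n + 1) 0 x = B₀ x) ∧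
  (∀ (n : ℕ) (t : ℝ), 0 < t → ∀ (x : Spc D) (k : Fin D),
    U (n + 1) t x k = (∫ w, heatK D ν (x - w) t * U₀ w k)
      - (∫ s in Set.Ioo (0 : ℝ) t, ∫ w,
          ∑ j, pd j (fun y => heatK D ν y (t - s)) (x - w)
            * (U n s w j * U n s w k - B n s w j * B n s w k))
      - (∫ s in Set.Ioo (0 : ℝ) t, ∫ w,
          pd k (fun y => heatK D ν y (t - s)) (x - w) * P n s w) ∧
    B (n + 1) t x k = (∫ w, heatK D μ (x - w) t * B₀ w k)
      - (∫ s in Set.Ioo (0 : ℝ) t, ∫ w,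
          ∑ j, pd j (fun y => heatK D μ y (t - s)) (x - w)
            * (U n s w j * B n s w k - B n s w j * U n s w k))) ∧
  (∃ Cd : ℝ, 0 < Cd ∧ ∀ (n : ℕ) (t : ℝ), 0 < t →
    IsBMO (P (n + 1) t) ∧
    SolvesPoisson D (P (n + 1) t)
      (fun j k x => U (n + 1) t x j * U (n + 1) t x k - B (n + 1) t x j * B (n + 1) t x k) ∧
    bmoNorm (P (n + 1) t)
      ≤ Cd * ⨆ x, ∑ j, ∑ k,
          |U (n + 1) t x j * U (n + 1) t x k - B (n + 1) t x j * B (n + 1) t x k|)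

/-- The imaginary part of a point of `ℂ^D` as a point of `ℝ^D`. -/
def imPart (z : CSpc D) : Spc D := (WithLp.equiv 2 (Fin D → ℝ)).symm fun j => (z j).im

/-- The canonical embedding `ℝ^D ↪ ℂ^D`. -/
def toC (x : Spc D) : CSpc D := (WithLp.equiv 2 (Fin D → ℂ)).symm fun j => (x j : ℂ)

/-- The closed strip `{x + iy ∈ ℂ^D : |y| ≤ ρ}`. -/
def strip (D : ℕ) (ρ : ℝ) : Set (CSpc D) := {z | ‖imPart z‖ ≤ ρ}

/-- Super-level set of a time dependent vector field. -/
def superLevel (F : ℝ → Spc D → Spc D) (t M : ℝ) : Set (Spc D) :=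
  {x | M < ‖F t x‖}

/-- `S` is linearly `δ`-sparse around `x₀` at scale `r`. -/
def LinSparse (δ : ℝ) (S : Set (Spc D)) (x₀ : Spc D) (r : ℝ) : Prop :=
  ∃ d : Spc D, ‖d‖ = 1 ∧
    (volume {τ : ℝ | τ ∈ Set.Ioo (-r) r ∧ x₀ + τ • d ∈ S}).toReal ≤ δ * (2 * r)

/-- The uniform analytic extension property for the constant `C₄`: mild solutions with
bounded divergence-free data extend holomorphically to the strip of width `√t/(2C₄)`
with the uniform bound `2βC₄(‖V₀‖_∞ + ‖W₀‖_∞)`. -/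
def UnifAnalExt (D : ℕ) (ν μ : ℝ) (C₄ : ℝ) : Prop :=
  ∀ (V₀ W₀ : Spc D → Spc D) (Tstar : ℝ) (V W : ℝ → Spc D → Spc D),
    MemLinf V₀ → MemLinf W₀ → DivFree V₀ → DivFree W₀ →
    MildMHD D ν μ V₀ W₀ (Set.Ioo 0 Tstar) V W →
    ∀ β ∈ Set.Ioc (1 / 2 : ℝ) 1, ∀ t : ℝ, 0 < t →
      t < min Tstar ((2 * β - 1) ^ 2 / β ^ 4
          * (1 / (16 * C₄ ^ 4 * (supN V₀ + supN W₀) ^ 2))) →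
      ∃ F H : CSpc D → CSpc D,
        AnalyticOnNhd ℂ F (strip D (Real.sqrt t / (2 * C₄))) ∧
        AnalyticOnNhd ℂ H (strip D (Real.sqrt t / (2 * C₄))) ∧
        (∀ x : Spc D, F (toC x) = toC (V t x)) ∧
        (∀ x : Spc D, H (toC x) = toC (W t x)) ∧
        ∀ z ∈ strip D (Real.sqrt t / (2 * C₄)),
          ‖F z‖ + ‖H z‖ ≤ 2 * β * C₄ * (supN V₀ + supN W₀)

/-- The magnetic-field bound property for the constant `C₃`. -/
def MagBound (D : ℕ) (ν μ : ℝ) (C₃ : ℝ) : Prop :=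
  ∀ (V₀ W₀ : Spc D → Spc D), MemLinf V₀ → MemLinf W₀ → DivFree V₀ → DivFree W₀ →
  ∀ T : ℝ, 0 < T → ∀ V W, MildMHD D ν μ V₀ W₀ (Set.Ioo 0 T) V W →
    ∀ t ∈ Set.Ioo (0 : ℝ) (min T (1 / (16 * C₃ ^ 2 * (stSup T V) ^ 2))),
      ∀ x, ‖W t x‖ ≤ 2 * C₃ * supN W₀

/-- `p` is a distributional solution of `-Δp = ∂_j ∂_k f`. -/
def DistSolJK (D : ℕ) (f p : Spc D → ℝ) (j k : Fin D) : Prop :=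
  ∀ φ : SchwartzMap (Spc D) ℝ,
    -∫ x, p x * lap (⇑φ) x = ∫ x, f x * pd j (fun y => pd k (⇑φ) y) x

section

/-! ### Square integrable solutions -/

open scoped SchwartzMap LineDeriv

/-- The `j`-th partial derivative as an operator on Schwartz functions. -/
def pdS (j : Fin D) (φ : 𝓢(Spc D, ℝ)) : 𝓢(Spc D, ℝ) := ∂_{EuclideanSpace.single j (1 : ℝ)} φ

/-- The Laplacian as an operator on Schwartz functions. -/
def lapS (φ : 𝓢(Spc D, ℝ)) : 𝓢(Spc D, ℝ) := ∑ j, pdS j (pdS j φ)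

lemma coe_pdS (j : Fin D) (φ : 𝓢(Spc D, ℝ)) : ⇑(pdS j φ) = pd j ⇑φ := by
  funext x
  simp [pdS, pd, SchwartzMap.lineDerivOp_apply_eq_fderiv]

lemma coe_pdS_pdS (j k : Fin D) (φ : 𝓢(Spc D, ℝ)) :
    ⇑(pdS j (pdS k φ)) = pd j (fun y => pd k ⇑φ y) := by
  rw [coe_pdS, coe_pdS]

lemma coe_lapS (φ : 𝓢(Spc D, ℝ)) : ⇑(lapS φ) = lap ⇑φ := by
  funext x
  simp only [lapS, lap, _root_.sum_apply, coe_pdS_pdS]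

lemma pdS_add (j : Fin D) (φ ψ : 𝓢(Spc D, ℝ)) : pdS j (φ + ψ) = pdS j φ + pdS j ψ := by
  simp [pdS, LineDeriv.lineDerivOp_add]

lemma pdS_smul (j : Fin D) (c : ℝ) (φ : 𝓢(Spc D, ℝ)) : pdS j (c • φ) = c • pdS j φ := by
  simp [pdS, LineDeriv.lineDerivOp_smul]

lemma lapS_add (φ ψ : 𝓢(Spc D, ℝ)) : lapS (φ + ψ) = lapS φ + lapS ψ := by
  simp [lapS, pdS_add, Finset.sum_add_distrib]

lemma lapS_smul (c : ℝ) (φ : 𝓢(Spc D, ℝ)) : lapS (c • φ) = c • lapS φ := by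
  simp [lapS, pdS_smul, Finset.smul_sum]

lemma pdS_comm (j k : Fin D) (φ : 𝓢(Spc D, ℝ)) : pdS j (pdS k φ) = pdS k (pdS j φ) := by
  have key : ∀ (a b : Fin D) (x : Spc D), pdS a (pdS b φ) x
      = fderiv ℝ (fderiv ℝ ⇑φ) x (EuclideanSpace.single a 1) (EuclideanSpace.single b 1) := by
    intro a b x
    rw [coe_pdS_pdS]
    have hd : DifferentiableAt ℝ (fderiv ℝ ⇑φ) x :=
      (ContDiff.fderiv_right (m := 1) (φ.smooth 2) le_rfl).differentiable (by simp) x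
    simp only [pd]
    rw [fderiv_clm_apply hd (by fun_prop)]
    simp
  ext x
  rw [key, key]
  have hs : IsSymmSndFDerivAt ℝ ⇑φ x :=
    ((φ.smooth 2).contDiffAt).isSymmSndFDerivAt (by simp)
  exact hs _ _

lemma integral_mul_pdS (j : Fin D) (φ ψ : 𝓢(Spc D, ℝ)) :
    ∫ x, φ x * pdS j ψ x = -∫ x, pdS j φ x * ψ x :=
  SchwartzMap.integral_mul_lineDerivOp_right_eq_neg_left φ ψ _

lemma integrable_schwartz_mul (φ ψ : 𝓢(Spc D, ℝ)) : Integrable (fun x => φ x * ψ x) :=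
  (φ.memLp 2).integrable_mul (ψ.memLp 2)

lemma integral_pdS_mul_swap (a b : Fin D) (φ : 𝓢(Spc D, ℝ)) :
    ∫ x, pdS a (pdS a φ) x * pdS b (pdS b φ) x = ∫ x, pdS a (pdS b φ) x ^ 2 := by
  rw [integral_mul_pdS]
  have h : pdS b (pdS a (pdS a φ)) = pdS a (pdS a (pdS b φ)) := by
    rw [pdS_comm b a, pdS_comm b a]
  rw [h]
  have h2 := integral_mul_pdS a (pdS b φ) (pdS a (pdS b φ))
  simp_rw [mul_comm (pdS a (pdS a (pdS b φ)) _)]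
  rw [h2, neg_neg]
  simp_rw [sq]

/-- Integrating by parts twice, `‖Δφ‖₂² = ∑ ‖∂_a∂_bφ‖₂²`, so each second derivative is controlled
in `L²` by the Laplacian. -/
lemma integral_sq_pdS_le (j k : Fin D) (φ : 𝓢(Spc D, ℝ)) :
    ∫ x, pdS j (pdS k φ) x ^ 2 ≤ ∫ x, lapS φ x ^ 2 := by
  have h1 : ∫ x, lapS φ x ^ 2 = ∑ a, ∑ b, ∫ x, pdS a (pdS b φ) x ^ 2 := by
    simp_rw [← integral_pdS_mul_swap]
    simp_rw [← integral_finsetSum Finset.univ (fun b _ => integrable_schwartz_mul _ _)]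
    rw [← integral_finsetSum]
    · congr 1
      funext x
      simp only [lapS, _root_.sum_apply]
      rw [sq, Finset.sum_mul_sum]
    · intro a _
      exact integrable_finsetSum _ (fun b _ => integrable_schwartz_mul _ _)
  rw [h1]
  have hn : ∀ a b, 0 ≤ ∫ x, pdS a (pdS b φ) x ^ 2 := fun a b =>
    integral_nonneg (fun x => sq_nonneg _)
  calc _ ≤ ∑ b, ∫ x, pdS j (pdS b φ) x ^ 2 :=
        Finset.single_le_sum (f := fun b => ∫ x, pdS j (pdS b φ) x ^ 2)
          (fun b _ => hn j b) (Finset.mem_univ k)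
    _ ≤ _ := Finset.single_le_sum (f := fun a => ∑ b, ∫ x, pdS a (pdS b φ) x ^ 2)
          (fun a _ => Finset.sum_nonneg (fun b _ => hn a b)) (Finset.mem_univ j)

lemma inner_eq_integral (u v : Lp ℝ 2 (volume : Measure (Spc D))) :
    inner ℝ u v = ∫ x, u x * v x := by
  rw [L2.inner_def]
  congr 1
  funext x
  simp [mul_comm]

lemma sq_norm_eq_integral (u : Lp ℝ 2 (volume : Measure (Spc D))) :
    ‖u‖ ^ 2 = ∫ x, u x ^ 2 := by
  rw [← real_inner_self_eq_norm_sq, inner_eq_integral]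
  simp_rw [sq]

/-- Extending a functional that is bounded relative to a linear map into a Hilbert space, and
representing it by the Riesz theorem. -/
lemma exists_riesz {V H : Type*} [AddCommGroup V] [Module ℝ V] [NormedAddCommGroup H]
    [InnerProductSpace ℝ H] [CompleteSpace H] (A : V →ₗ[ℝ] H) (B : V →ₗ[ℝ] ℝ) (K : ℝ) (hK : 0 ≤ K)
    (h : ∀ v, |B v| ≤ K * ‖A v‖) : ∃ u : H, ‖u‖ ≤ K ∧ ∀ v, inner ℝ u (A v) = B v := by
  have hker : LinearMap.ker A ≤ LinearMap.ker B := by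
    intro v hv
    rw [LinearMap.mem_ker] at hv ⊢
    have := h v
    rw [hv, norm_zero, mul_zero] at this
    exact abs_nonpos_iff.mp this
  let L : LinearMap.range A →ₗ[ℝ] ℝ :=
    ((LinearMap.ker A).liftQ B hker) ∘ₗ (A.quotKerEquivRange.symm : _ →ₗ[ℝ] _)
  have hL : ∀ v, L ⟨A v, LinearMap.mem_range_self A v⟩ = B v := by
    intro v
    have : A.quotKerEquivRange.symm ⟨A v, LinearMap.mem_range_self A v⟩
        = (LinearMap.ker A).mkQ v := by
      rw [LinearEquiv.symm_apply_eq]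
      ext
      simp
    simp [L, this]
  have hb : ∀ y : LinearMap.range A, ‖L y‖ ≤ K * ‖y‖ := by
    rintro ⟨_, v, rfl⟩
    rw [hL]
    exact h v
  obtain ⟨g, hg, hgn⟩ := exists_extension_norm_eq (LinearMap.range A) (L.mkContinuous K hb)
  refine ⟨(InnerProductSpace.toDual ℝ H).symm g, ?_, ?_⟩
  · rw [LinearIsometryEquiv.norm_map, hgn]
    exact L.mkContinuous_norm_le hK hb
  · intro v
    rw [InnerProductSpace.toDual_symm_apply]
    have := hg ⟨A v, LinearMap.mem_range_self A v⟩
    simp only [LinearMap.mkContinuous_apply, hL] at this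
    exact this

/-- Square integrable data have a square integrable solution with no larger norm. -/
lemma exists_L2_sol (j k : Fin D) (g : Spc D → ℝ) (hg : MemLp g 2 volume) :
    ∃ u : Spc D → ℝ, MemLp u 2 volume ∧ DistSolJK D g u j k ∧ ∫ x, u x ^ 2 ≤ ∫ x, g x ^ 2 := by
  let A : 𝓢(Spc D, ℝ) →ₗ[ℝ] Lp ℝ 2 (volume : Measure (Spc D)) :=
    { toFun := fun φ => SchwartzMap.toLpCLM ℝ ℝ 2 volume (lapS φ)
      map_add' := fun φ ψ => by rw [lapS_add, map_add]
      map_smul' := fun c φ => by rw [lapS_smul, map_smul]; rfl }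
  let P : 𝓢(Spc D, ℝ) →ₗ[ℝ] Lp ℝ 2 (volume : Measure (Spc D)) :=
    { toFun := fun φ => SchwartzMap.toLpCLM ℝ ℝ 2 volume (pdS j (pdS k φ))
      map_add' := fun φ ψ => by rw [pdS_add, pdS_add, map_add]
      map_smul' := fun c φ => by rw [pdS_smul, pdS_smul, map_smul]; rfl }
  have hA : ∀ φ, (A φ : Spc D → ℝ) =ᵐ[volume] lapS φ := fun φ => (lapS φ).coeFn_toLp 2 volume
  have hP : ∀ φ, (P φ : Spc D → ℝ) =ᵐ[volume] pdS j (pdS k φ) :=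
    fun φ => (pdS j (pdS k φ)).coeFn_toLp 2 volume
  have hPA : ∀ φ, ‖P φ‖ ≤ ‖A φ‖ := by
    intro φ
    refine le_of_sq_le_sq ?_ (norm_nonneg _)
    rw [sq_norm_eq_integral, sq_norm_eq_integral]
    have e1 : ∫ x, (P φ) x ^ 2 = ∫ x, pdS j (pdS k φ) x ^ 2 :=
      integral_congr_ae ((hP φ).mono fun x hx => by simp only [hx])
    have e2 : ∫ x, (A φ) x ^ 2 = ∫ x, lapS φ x ^ 2 :=
      integral_congr_ae ((hA φ).mono fun x hx => by simp only [hx])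
    rw [e1, e2]
    exact integral_sq_pdS_le j k φ
  let G : Lp ℝ 2 (volume : Measure (Spc D)) := hg.toLp g
  have hG : (G : Spc D → ℝ) =ᵐ[volume] g := hg.coeFn_toLp
  let B : 𝓢(Spc D, ℝ) →ₗ[ℝ] ℝ := -((innerₗ _ G) ∘ₗ P)
  obtain ⟨u, hu, huB⟩ := exists_riesz A B ‖G‖ (norm_nonneg _) (by
    intro φ
    simp only [B, LinearMap.neg_apply, LinearMap.comp_apply, innerₗ_apply_apply, abs_neg]
    exact (abs_real_inner_le_norm _ _).trans (mul_le_mul_of_nonneg_left (hPA φ) (norm_nonneg _)))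
  refine ⟨u, Lp.memLp u, ?_, ?_⟩
  · intro φ
    have := huB φ
    simp only [B, LinearMap.neg_apply, LinearMap.comp_apply, innerₗ_apply_apply,
      inner_eq_integral] at this
    rw [← coe_lapS, ← coe_pdS_pdS]
    have e1 : ∫ x, u x * lapS φ x = ∫ x, u x * (A φ) x :=
      integral_congr_ae ((hA φ).mono fun x hx => by simp only [hx])
    have e2 : ∫ x, g x * pdS j (pdS k φ) x = ∫ x, G x * (P φ) x :=
      integral_congr_ae (by filter_upwards [hP φ, hG] with x hx hx2; simp only [hx, hx2])
    rw [e1, e2, this, neg_neg]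
  · have e : ∫ x, g x ^ 2 = ∫ x, G x ^ 2 :=
      integral_congr_ae (hG.mono fun x hx => by simp only [hx])
    rw [e, ← sq_norm_eq_integral, ← sq_norm_eq_integral]
    exact pow_le_pow_left₀ (norm_nonneg _) hu 2

/-! ### Mollification of weak solutions -/

open Filter Topology
open scoped ContDiff

/-- Smooth functions supported in the closed unit ball. -/
structure UnitBump (θ : Spc D → ℝ) : Prop where
  smooth : ContDiff ℝ ∞ θ
  zero : ∀ x, 1 < ‖x‖ → θ x = 0

namespace UnitBump
variable {θ : Spc D → ℝ}

lemma hasCompactSupport (h : UnitBump θ) : HasCompactSupport θ :=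
  HasCompactSupport.intro (isCompact_closedBall (0 : Spc D) 1) (fun x hx => h.zero x (by
    simpa using hx))

lemma exists_bound (h : UnitBump θ) : ∃ S : ℝ, 0 ≤ S ∧ ∀ x, |θ x| ≤ S := by
  obtain ⟨C, hC⟩ := h.hasCompactSupport.exists_bound_of_continuous h.smooth.continuous
  exact ⟨C, (norm_nonneg _).trans (hC 0), hC⟩

lemma exists_lipschitz (h : UnitBump θ) :
    ∃ L : ℝ, 0 ≤ L ∧ ∀ x y, |θ x - θ y| ≤ L * ‖x - y‖ := by
  obtain ⟨C, hC⟩ := h.smooth.lipschitzWith_of_hasCompactSupport h.hasCompactSupport (by simp)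
  exact ⟨C, C.2, fun x y => by simpa [dist_eq_norm] using hC.dist_le_mul x y⟩

lemma pd (h : UnitBump θ) (k : Fin D) : UnitBump (fun x => pd k θ x) where
  smooth := by
    unfold _root_.pd
    exact (h.smooth.fderiv_right (m := ∞) (by simp)).clm_apply contDiff_const
  zero := by
    intro x hx
    have : θ =ᶠ[𝓝 x] fun _ => 0 := by
      filter_upwards [(isOpen_lt continuous_const continuous_norm).mem_nhds hx] with y hy
      exact h.zero y hy
    simp [_root_.pd, this.fderiv_eq]

lemma lap (h : UnitBump θ) : UnitBump (fun x => lap θ x) where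
  smooth := by
    unfold _root_.lap
    exact ContDiff.sum (fun j _ => ((h.pd j).pd j).smooth)
  zero := by
    intro x hx
    exact Finset.sum_eq_zero (fun j _ => ((h.pd j).pd j).zero x hx)

/-- The dilate `θ(r⁻¹(x - ·))` lives in the closed ball of radius `r` about `x`. -/
lemma dilate_zero (h : UnitBump θ) {r : ℝ} (hr : 0 < r) {x y : Spc D}
    (hy : y ∉ Metric.closedBall x r) : θ (r⁻¹ • (x - y)) = 0 := by
  apply h.zero
  rw [norm_smul, norm_inv, norm_of_nonneg hr.le, ← div_eq_inv_mul, lt_div_iff₀ hr, one_mul]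
  rw [Metric.mem_closedBall, not_le, dist_eq_norm'] at hy
  exact hy

lemma dilate_continuous (h : UnitBump θ) (r : ℝ) (x : Spc D) :
    Continuous (fun y => θ (r⁻¹ • (x - y))) :=
  h.smooth.continuous.comp (by fun_prop)

lemma dilate_smooth (h : UnitBump θ) (r : ℝ) (x : Spc D) :
    ContDiff ℝ ∞ (fun y => θ (r⁻¹ • (x - y))) :=
  h.smooth.comp (by fun_prop)

lemma dilate_hasCompactSupport (h : UnitBump θ) {r : ℝ} (hr : 0 < r) (x : Spc D) :
    HasCompactSupport (fun y => θ (r⁻¹ • (x - y))) :=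
  HasCompactSupport.intro (isCompact_closedBall x r) (fun _ hy => h.dilate_zero hr hy)

lemma integrable_mul (h : UnitBump θ) {v : Spc D → ℝ} (hv : LocallyIntegrable v volume)
    {r : ℝ} (hr : 0 < r) (x : Spc D) : Integrable (fun y => v y * θ (r⁻¹ • (x - y))) := by
  have := hv.integrable_smul_left_of_hasCompactSupport (h.dilate_continuous r x)
    (h.dilate_hasCompactSupport hr x)
  refine this.congr (ae_of_all _ fun y => ?_)
  simp [mul_comm]

end UnitBump

lemma pd_dilate {F : Spc D → ℝ} (hF : Differentiable ℝ F) (k : Fin D) (r : ℝ) (x y : Spc D) :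
    pd k (fun y => F (r⁻¹ • (x - y))) y = -r⁻¹ * pd k F (r⁻¹ • (x - y)) := by
  have h1 : HasFDerivAt (fun y : Spc D => r⁻¹ • (x - y))
      (r⁻¹ • (-ContinuousLinearMap.id ℝ (Spc D))) y :=
    ((hasFDerivAt_id y).const_sub x).const_smul r⁻¹
  have h2 := ((hF (r⁻¹ • (x - y))).hasFDerivAt).comp y h1
  have h3 := h2.fderiv
  simp only [pd]
  rw [show (fun y => F (r⁻¹ • (x - y))) = F ∘ (fun y : Spc D => r⁻¹ • (x - y)) from rfl, h3]
  simp

lemma pd_const_mul {F : Spc D → ℝ} (hF : Differentiable ℝ F) (k : Fin D) (c : ℝ) (y : Spc D) :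
    pd k (fun y => c * F y) y = c * pd k F y := by
  simp only [pd]
  rw [fderiv_const_mul (hF y)]
  simp

lemma pd_pd_dilate {θ : Spc D → ℝ} (h : UnitBump θ) (j k : Fin D) (r : ℝ) (x y : Spc D) :
    pd j (fun y => pd k (fun y => θ (r⁻¹ • (x - y))) y) y
      = r⁻¹ ^ 2 * pd j (fun y => pd k θ y) (r⁻¹ • (x - y)) := by
  have h1 : (fun y => pd k (fun y => θ (r⁻¹ • (x - y))) y)
      = fun y => -r⁻¹ * (fun z => pd k θ z) (r⁻¹ • (x - y)) := by
    funext y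
    exact pd_dilate (h.smooth.differentiable (by simp)) k r x y
  rw [h1, pd_const_mul ((((h.pd k).dilate_smooth r x)).differentiable (by simp)),
    pd_dilate ((h.pd k).smooth.differentiable (by simp))]
  ring

lemma lap_dilate {θ : Spc D → ℝ} (h : UnitBump θ) (r : ℝ) (x y : Spc D) :
    lap (fun y => θ (r⁻¹ • (x - y))) y = r⁻¹ ^ 2 * lap θ (r⁻¹ • (x - y)) := by
  simp only [lap, pd_pd_dilate h, Finset.mul_sum]

/-- Distributional solutions of `-Δv = ∂_j∂_k g` tested only against compactly supported functions;
for these, differences of solutions need no integrability at infinity. -/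
def WeakSol (g v : Spc D → ℝ) (j k : Fin D) : Prop :=
  ∀ φ : 𝓢(Spc D, ℝ), HasCompactSupport ⇑φ →
    -∫ x, v x * lap (⇑φ) x = ∫ x, g x * pd j (fun y => pd k (⇑φ) y) x

lemma DistSolJK.weakSol {g v : Spc D → ℝ} {j k : Fin D} (h : DistSolJK D g v j k) :
    WeakSol g v j k := fun φ _ => h φ

lemma hasCompactSupport_pdS {φ : 𝓢(Spc D, ℝ)} (h : HasCompactSupport ⇑φ) (j : Fin D) :
    HasCompactSupport ⇑(pdS j φ) := by
  rw [coe_pdS]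
  exact h.fderiv_apply ℝ _

lemma hasCompactSupport_lapS {φ : 𝓢(Spc D, ℝ)} (h : HasCompactSupport ⇑φ) :
    HasCompactSupport ⇑(lapS φ) := by
  have : ⇑(lapS φ) = ∑ j, ⇑(pdS j (pdS j φ)) := by
    funext x
    simp [lapS]
  rw [this]
  exact Finset.sum_induction _ (fun f : Spc D → ℝ => HasCompactSupport f)
    (fun _ _ ha hb => ha.add hb) HasCompactSupport.zero
    (fun j _ => hasCompactSupport_pdS (hasCompactSupport_pdS h j) j)

lemma WeakSol.sub {g g' v v' : Spc D → ℝ} {j k : Fin D} (h : WeakSol g v j k)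
    (h' : WeakSol g' v' j k) (hg : LocallyIntegrable g volume) (hg' : LocallyIntegrable g' volume)
    (hv : LocallyIntegrable v volume) (hv' : LocallyIntegrable v' volume) :
    WeakSol (fun x => g x - g' x) (fun x => v x - v' x) j k := by
  intro φ hφ
  have e1 := h φ hφ
  have e2 := h' φ hφ
  have hi : ∀ w : Spc D → ℝ, LocallyIntegrable w volume → ∀ χ : 𝓢(Spc D, ℝ),
      HasCompactSupport ⇑χ → Integrable (fun x => w x * χ x) := by
    intro w hw χ hχ
    refine (hw.integrable_smul_left_of_hasCompactSupport χ.continuous hχ).congr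
      (ae_of_all _ fun y => ?_)
    simp [mul_comm]
  rw [← coe_lapS, ← coe_pdS_pdS] at *
  have c1 := hasCompactSupport_lapS hφ
  have c2 := hasCompactSupport_pdS (hasCompactSupport_pdS hφ k) j
  simp only [sub_mul]
  rw [integral_sub (hi v hv _ c1) (hi v' hv' _ c1), integral_sub (hi g hg _ c2) (hi g' hg' _ c2),
    ← e1, ← e2]
  ring

/-- A mollifying kernel `η` together with a potential `ψ` satisfying `∇ψ(x) = -η(x) x`. The relation
makes `∂_r (r⁻ᴰ η(x/r)) = r⁻ᴰ⁻¹ (Δψ)(x/r)`, so that changing the mollification scale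
amounts to testing against a Laplacian of a test function. -/
structure MollPair (D : ℕ) where
  /-- the potential -/
  ψ : Spc D → ℝ
  /-- the mollifying kernel -/
  η : Spc D → ℝ
  bψ : UnitBump ψ
  bη : UnitBump η
  int_one : ∫ x, η x = 1
  grad : ∀ x v, fderiv ℝ ψ x v = -η x * inner ℝ x v

/-- The pair is `ψ(x) = ζ(|x|²)`, `η(x) = -2ζ'(|x|²)` up to normalization, with `ζ` a smooth
decreasing cutoff. -/
lemma exists_mollPair (hD : 0 < D) : Nonempty (MollPair D) := by
  let st := Real.smoothTransition
  have hst : ContDiff ℝ ∞ st := Real.smoothTransition.contDiff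
  let ψ : Spc D → ℝ := fun x => st (1 - ‖x‖ ^ 2)
  let η : Spc D → ℝ := fun x => 2 * deriv st (1 - ‖x‖ ^ 2)
  have hq : ContDiff ℝ ∞ (fun x : Spc D => 1 - ‖x‖ ^ 2) :=
    contDiff_const.sub (contDiff_norm_sq ℝ)
  have hneg : ∀ x : Spc D, 1 < ‖x‖ → 1 - ‖x‖ ^ 2 < 0 := by
    intro x hx
    nlinarith
  have bψ : UnitBump ψ :=
    ⟨hst.comp hq, fun x hx => Real.smoothTransition.zero_of_nonpos (hneg x hx).le⟩
  have bη : UnitBump η := by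
    refine ⟨contDiff_const.mul (ContDiff.comp (g := deriv st) ?_ hq), fun x hx => ?_⟩
    · exact ((contDiff_infty_iff_deriv).1 hst).2
    · have : st =ᶠ[𝓝 (1 - ‖x‖ ^ 2)] fun _ => 0 := by
        filter_upwards [Iio_mem_nhds (hneg x hx)] with t ht
        exact Real.smoothTransition.zero_of_nonpos (le_of_lt ht)
      simp [η, this.deriv_eq]
  have grad : ∀ x v, fderiv ℝ ψ x v = -η x * inner ℝ x v := by
    intro x v
    have h1 : HasFDerivAt (fun x : Spc D => 1 - ‖x‖ ^ 2) (-(2 • innerSL ℝ x)) x :=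
      (hasStrictFDerivAt_norm_sq x).hasFDerivAt.const_sub 1
    have h2 : HasDerivAt st (deriv st (1 - ‖x‖ ^ 2)) (1 - ‖x‖ ^ 2) :=
      ((hst.differentiable (by simp)) _).hasDerivAt
    have h3 := (h2.comp_hasFDerivAt x h1).fderiv
    have : ψ = st ∘ (fun x : Spc D => 1 - ‖x‖ ^ 2) := rfl
    rw [this, h3]
    simp [η]
    ring
  have hη0 : 0 ≤ η := fun x =>
    mul_nonneg zero_le_two (Real.smoothTransition.monotone.deriv_nonneg)
  have hne : ∃ x, η x ≠ 0 := by
    by_contra hcon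
    push Not at hcon
    have hz : ∀ x, fderiv ℝ ψ x = 0 := by
      intro x
      ext v
      rw [grad, hcon]
      simp
    have := is_const_of_fderiv_eq_zero (bψ.smooth.differentiable (by simp)) hz 0
      (EuclideanSpace.single ⟨0, hD⟩ 1)
    simp [ψ, st] at this
  obtain ⟨x0, hx0⟩ := hne
  have hpos : 0 < ∫ x, η x :=
    bη.smooth.continuous.integral_pos_of_hasCompactSupport_nonneg_nonzero bη.hasCompactSupport
      hη0 hx0
  set c := (∫ x, η x)⁻¹ with hc
  refine ⟨⟨fun x => c * ψ x, fun x => c * η x,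
    ⟨contDiff_const.mul bψ.smooth, fun x hx => by rw [bψ.zero x hx, mul_zero]⟩,
    ⟨contDiff_const.mul bη.smooth, fun x hx => by rw [bη.zero x hx, mul_zero]⟩, ?_, ?_⟩⟩
  · rw [integral_const_mul, hc, inv_mul_cancel₀ hpos.ne']
  · intro x v
    rw [fderiv_const_mul ((bψ.smooth.differentiable (by simp)) x)]
    simp [grad]
    ring

namespace MollPair
variable (P : MollPair D)

lemma lap_ψ (y : Spc D) : lap P.ψ y = -(D * P.η y) - fderiv ℝ P.η y y := by
  have hd : DifferentiableAt ℝ P.η y := P.bη.smooth.differentiable (by simp) y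
  have h1 : ∀ j, (fun z => pd j P.ψ z) = fun z => -(P.η z * z j) := by
    intro j
    funext z
    rw [pd, P.grad, EuclideanSpace.inner_single_right]
    simp
  have h2 : ∀ j, pd j (fun z => pd j P.ψ z) y
      = -(P.η y) - y j * fderiv ℝ P.η y (EuclideanSpace.single j 1) := by
    intro j
    rw [h1, pd]
    have hc : HasFDerivAt (fun z : Spc D => z j) (EuclideanSpace.proj (𝕜 := ℝ) j) y :=
      (EuclideanSpace.proj (𝕜 := ℝ) (ι := Fin D) j).hasFDerivAt
    have := ((hd.hasFDerivAt.mul hc).neg).fderiv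
    have e : (fun z => -(P.η z * z j)) = -(fun z : Spc D => P.η z * z j) := rfl
    simp only [e]
    erw [this]
    simp
    ring
  rw [lap, Finset.sum_congr rfl (fun j _ => h2 j), Finset.sum_sub_distrib]
  have h3 : fderiv ℝ P.η y y = ∑ j, y j * fderiv ℝ P.η y (EuclideanSpace.single j 1) := by
    have hy := (EuclideanSpace.basisFun (Fin D) ℝ).sum_repr y
    simp only [EuclideanSpace.basisFun_apply, EuclideanSpace.basisFun_repr] at hy
    calc fderiv ℝ P.η y y = fderiv ℝ P.η y (∑ j, y j • EuclideanSpace.single j (1 : ℝ)) := by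
          rw [hy]
      _ = _ := by simp [map_sum]
  rw [h3]
  simp

/-- The kernel evolves with the scale by a Laplacian: `Δψ = -(Dη + x·∇η)` is exactly what
differentiating `r⁻ᴰ η(z/r)` produces. -/
lemma hasDerivAt_kernel (z : Spc D) {r : ℝ} (hr : 0 < r) :
    HasDerivAt (fun r : ℝ => r⁻¹ ^ D * P.η (r⁻¹ • z)) (r⁻¹ ^ (D + 1) * lap P.ψ (r⁻¹ • z)) r := by
  have hd : HasFDerivAt P.η (fderiv ℝ P.η (r⁻¹ • z)) (r⁻¹ • z) :=
    (P.bη.smooth.differentiable (by simp) _).hasFDerivAt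
  have h0 : HasDerivAt (fun r : ℝ => r⁻¹) (-(r ^ 2)⁻¹) r := hasDerivAt_inv hr.ne'
  have h1 : HasDerivAt (fun r : ℝ => r⁻¹ • z) (-(r ^ 2)⁻¹ • z) r := h0.smul_const z
  have h2 := (h0.pow D).mul (hd.comp_hasDerivAt r h1)
  refine h2.congr_deriv ?_
  symm
  rw [lap_ψ]
  have e : -(r ^ 2)⁻¹ • z = (-r⁻¹) • (r⁻¹ • z) := by
    rw [smul_smul]; congr 1; field_simp
  have e2 : fderiv ℝ P.η (r⁻¹ • z) (-(r ^ 2)⁻¹ • z)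
      = -r⁻¹ * fderiv ℝ P.η (r⁻¹ • z) (r⁻¹ • z) := by
    rw [e, ContinuousLinearMap.map_smul, smul_eq_mul]
  rw [e2]
  simp only [Pi.pow_apply, Function.comp_apply, ← inv_pow]
  generalize fderiv ℝ P.η (r⁻¹ • z) (r⁻¹ • z) = a
  generalize P.η (r⁻¹ • z) = b
  rcases Nat.eq_zero_or_pos D with h | h
  · simp [h]
  · obtain ⟨m, rfl⟩ := Nat.exists_eq_succ_of_ne_zero h.ne'
    simp only [Nat.succ_eq_add_one, Nat.add_sub_cancel]
    push_cast
    ring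

/-- Mollification of `v` at scale `r`. -/
def moll (v : Spc D → ℝ) (r : ℝ) (x : Spc D) : ℝ := ∫ y, v y * (r⁻¹ ^ D * P.η (r⁻¹ • (x - y)))

/-- Change of the mollification of a solution with the scale: only the data enter. -/
lemma hasDerivAt_moll {v g : Spc D → ℝ} {j k : Fin D} (hv : LocallyIntegrable v volume)
    (hs : WeakSol g v j k) (x : Spc D) {r : ℝ} (hr : 0 < r) :
    HasDerivAt (fun r => P.moll v r x)
      (-(r⁻¹ ^ (D + 1) * ∫ y, g y * pd j (fun z => pd k P.ψ z) (r⁻¹ • (x - y)))) r := by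
  obtain ⟨S, hS0, hS⟩ := P.bψ.lap.exists_bound
  let F : ℝ → Spc D → ℝ := fun r y => v y * (r⁻¹ ^ D * P.η (r⁻¹ • (x - y)))
  let F' : ℝ → Spc D → ℝ := fun r y => v y * (r⁻¹ ^ (D + 1) * lap P.ψ (r⁻¹ • (x - y)))
  have hF : ∀ s, 0 < s → Integrable (F s) := by
    intro s hs'
    refine ((P.bη.integrable_mul hv hs' x).const_mul (s⁻¹ ^ D)).congr (ae_of_all _ fun y => ?_)
    simp only [F]; ring
  have hF' : ∀ s, 0 < s → Integrable (F' s) := by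
    intro s hs'
    refine ((P.bψ.lap.integrable_mul hv hs' x).const_mul (s⁻¹ ^ (D + 1))).congr
      (ae_of_all _ fun y => ?_)
    simp only [F']; ring
  let bound : Spc D → ℝ :=
    (Metric.closedBall x (2 * r)).indicator (fun y => |v y| * ((r / 2)⁻¹ ^ (D + 1) * S))
  have hbI : Integrable bound := by
    rw [integrable_indicator_iff measurableSet_closedBall]
    exact ((hv.integrableOn_isCompact (isCompact_closedBall x (2 * r))).abs).mul_const _
  have hb : ∀ y, ∀ s ∈ Ioo (r / 2) (2 * r), ‖F' s y‖ ≤ bound y := by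
    intro y s hs'
    have hs0 : 0 < s := lt_trans (half_pos hr) hs'.1
    by_cases hy : y ∈ Metric.closedBall x (2 * r)
    · simp only [bound, indicator_of_mem hy, F', norm_mul, Real.norm_eq_abs]
      gcongr
      · rw [abs_of_nonneg (by positivity)]
        gcongr
        exact hs'.1.le
      · exact hS _
    · have hy' : y ∉ Metric.closedBall x s := fun h =>
        hy (Metric.closedBall_subset_closedBall hs'.2.le h)
      have : lap P.ψ (s⁻¹ • (x - y)) = 0 := P.bψ.lap.dilate_zero hs0 hy'
      simp [F', this, bound, indicator_of_notMem hy]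
  have key := (hasDerivAt_integral_of_dominated_loc_of_deriv_le (F := F) (F' := F') (x₀ := r)
    (μ := volume) (s := Ioo (r / 2) (2 * r)) (bound := bound)
    (Ioo_mem_nhds (by linarith) (by linarith))
    (by filter_upwards [Ioi_mem_nhds hr] with s hs' using (hF s hs').aestronglyMeasurable)
    (hF r hr) (hF' r hr).aestronglyMeasurable (ae_of_all _ hb) hbI
    (ae_of_all _ fun y s hs' =>
      (P.hasDerivAt_kernel (x - y) (lt_trans (half_pos hr) hs'.1)).const_mul (v y))).2
  refine key.congr_deriv ?_
  have ht : -∫ y, v y * lap (fun y => P.ψ (r⁻¹ • (x - y))) y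
      = ∫ y, g y * pd j (fun y => pd k (fun y => P.ψ (r⁻¹ • (x - y))) y) y :=
    hs ((P.bψ.dilate_hasCompactSupport hr x).toSchwartzMap (P.bψ.dilate_smooth r x))
      (P.bψ.dilate_hasCompactSupport hr x)
  simp only [lap_dilate P.bψ, pd_pd_dilate P.bψ, mul_left_comm _ (r⁻¹ ^ 2),
    integral_const_mul] at ht
  simp only [F', mul_left_comm _ (r⁻¹ ^ (D + 1)), integral_const_mul]
  have hr2 : r⁻¹ ^ 2 ≠ 0 := by positivity
  have ht' : -∫ y, v y * lap P.ψ (r⁻¹ • (x - y))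
      = ∫ y, g y * pd j (fun y => pd k P.ψ y) (r⁻¹ • (x - y)) :=
    mul_left_cancel₀ hr2 (by rw [mul_neg]; exact ht)
  rw [← ht']
  ring
end MollPair

/-! ### Mean value estimates and the Liouville theorem -/

/-- Volume of the unit ball. -/
def vb (D : ℕ) : ℝ := volume.real (Metric.ball (0 : Spc D) 1)

lemma vb_pos : 0 < vb D :=
  ENNReal.toReal_pos (Metric.measure_ball_pos _ _ one_pos).ne' measure_ball_lt_top.ne

lemma vol_closedBall (x : Spc D) {r : ℝ} (hr : 0 ≤ r) :
    volume.real (Metric.closedBall x r) = r ^ D * vb D := by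
  rw [Measure.addHaar_real_closedBall _ _ hr, finrank_euclideanSpace_fin, vb]

lemma vol_ball (x : Spc D) {r : ℝ} (hr : 0 < r) :
    volume.real (Metric.ball x r) = r ^ D * vb D := by
  rw [measureReal_def, Measure.addHaar_ball_of_pos _ _ hr, finrank_euclideanSpace_fin, vb,
    ENNReal.toReal_mul, ENNReal.toReal_ofReal (by positivity), measureReal_def]

lemma UnitBump.abs_integral_le {θ : Spc D → ℝ} (h : UnitBump θ) {S : ℝ} (hS : ∀ x, |θ x| ≤ S)
    {w : Spc D → ℝ} (hw : LocallyIntegrable w volume) {r : ℝ} (hr : 0 < r) (x : Spc D) :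
    |∫ y, w y * θ (r⁻¹ • (x - y))| ≤ S * ∫ y in Metric.closedBall x r, |w y| := by
  have hi : IntegrableOn (fun y => |w y|) (Metric.closedBall x r) :=
    (hw.integrableOn_isCompact (isCompact_closedBall x r)).abs
  rw [← integral_const_mul, ← integral_indicator measurableSet_closedBall, ← Real.norm_eq_abs]
  refine norm_integral_le_of_norm_le
    ((integrable_indicator_iff measurableSet_closedBall).2 (hi.const_mul S)) (ae_of_all _ fun y => ?_)
  by_cases hy : y ∈ Metric.closedBall x r
  · rw [indicator_of_mem hy, norm_mul, Real.norm_eq_abs, Real.norm_eq_abs, mul_comm]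
    gcongr
    exact hS _
  · rw [indicator_of_notMem hy, h.dilate_zero hr hy]
    simp

/-- Comparison of the dilates of a Lipschitz bump about two centers. -/
lemma UnitBump.abs_integral_sub_le {θ : Spc D → ℝ} (h : UnitBump θ) {L : ℝ} (_hL0 : 0 ≤ L)
    (hL : ∀ x y, |θ x - θ y| ≤ L * ‖x - y‖)
    {w : Spc D → ℝ} (hw : LocallyIntegrable w volume) {r : ℝ} (hr : 0 < r) (x c : Spc D)
    {s : Set (Spc D)} (hs : MeasurableSet s) (hws : IntegrableOn w s)
    (hx : Metric.closedBall x r ⊆ s) (hc : Metric.closedBall c r ⊆ s) :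
    |(∫ y, w y * θ (r⁻¹ • (x - y))) - ∫ y, w y * θ (r⁻¹ • (c - y))|
      ≤ L * (r⁻¹ * ‖x - c‖) * ∫ y in s, |w y| := by
  rw [← integral_sub (h.integrable_mul hw hr x) (h.integrable_mul hw hr c),
    ← integral_const_mul, ← integral_indicator hs, ← Real.norm_eq_abs]
  refine norm_integral_le_of_norm_le
    ((integrable_indicator_iff hs).2 (hws.abs.const_mul _)) (ae_of_all _ fun y => ?_)
  by_cases hy : y ∈ s
  · rw [indicator_of_mem hy, ← mul_sub, norm_mul, Real.norm_eq_abs, Real.norm_eq_abs, mul_comm]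
    gcongr
    refine (hL _ _).trans_eq ?_
    rw [← smul_sub, norm_smul, norm_inv, Real.norm_of_nonneg hr.le]
    congr 3
    abel
  · rw [indicator_of_notMem hy, h.dilate_zero hr (fun h' => hy (hx h')),
      h.dilate_zero hr (fun h' => hy (hc h'))]
    simp

namespace MollPair
variable (P : MollPair D)

lemma moll_eq (v : Spc D → ℝ) (r : ℝ) (x : Spc D) :
    P.moll v r x = r⁻¹ ^ D * ∫ y, v y * P.η (r⁻¹ • (x - y)) := by
  rw [moll, ← integral_const_mul]
  congr 1
  funext y
  ring

lemma integral_dilate {r : ℝ} (hr : 0 < r) (x : Spc D) :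
    ∫ y, P.η (r⁻¹ • (x - y)) = r ^ D := by
  rw [integral_sub_left_eq_self (fun z => P.η (r⁻¹ • z)) volume x,
    Measure.integral_comp_inv_smul_of_nonneg _ _ hr.le, P.int_one, finrank_euclideanSpace_fin]
  simp

lemma integrable_dilate {r : ℝ} (hr : 0 < r) (x : Spc D) :
    Integrable (fun y => P.η (r⁻¹ • (x - y))) :=
  (P.bη.dilate_continuous r x).integrable_of_hasCompactSupport (P.bη.dilate_hasCompactSupport hr x)

lemma integral_sub_const {v : Spc D → ℝ} (hv : LocallyIntegrable v volume) (m : ℝ) {r : ℝ}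
    (hr : 0 < r) (x : Spc D) :
    ∫ y, (v y - m) * P.η (r⁻¹ • (x - y)) = (∫ y, v y * P.η (r⁻¹ • (x - y))) - m * r ^ D := by
  simp only [sub_mul]
  rw [integral_sub (P.bη.integrable_mul hv hr x) ((P.integrable_dilate hr x).const_mul m),
    integral_const_mul, P.integral_dilate hr]

lemma ae_tendsto_moll {v : Spc D → ℝ} (hv : LocallyIntegrable v volume) :
    ∀ᵐ x, Tendsto (fun r => P.moll v r x) (𝓝[>] 0) (𝓝 (v x)) := by
  obtain ⟨S, hS0, hS⟩ := P.bη.exists_bound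
  filter_upwards [IsUnifLocDoublingMeasure.ae_tendsto_average_norm_sub volume hv 1] with x hx
  have h1 := hx (l := 𝓝[>] (0 : ℝ)) (fun _ => x) (fun r => r) tendsto_id (by
    filter_upwards [self_mem_nhdsWithin] with r hr
    exact Metric.mem_closedBall_self (by rw [one_mul]; exact le_of_lt hr))
  rw [tendsto_iff_norm_sub_tendsto_zero]
  have h2 := h1.const_mul (S * vb D)
  rw [mul_zero] at h2
  refine squeeze_zero' (Eventually.of_forall fun _ => norm_nonneg _) ?_ h2
  filter_upwards [self_mem_nhdsWithin] with r hr
  have hr : 0 < r := hr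
  have hvs : LocallyIntegrable (fun y => v y - v x) volume :=
    hv.sub (locallyIntegrable_const _)
  have h3 := P.bη.abs_integral_le hS hvs hr x
  rw [P.integral_sub_const hv _ hr] at h3
  have h4 : P.moll v r x - v x
      = r⁻¹ ^ D * ((∫ y, v y * P.η (r⁻¹ • (x - y))) - v x * r ^ D) := by
    rw [moll_eq]
    generalize ∫ y, v y * P.η (r⁻¹ • (x - y)) = I
    rw [inv_pow]
    field_simp
  rw [h4, norm_mul, setAverage_eq, vol_closedBall _ hr.le, Real.norm_of_nonneg (by positivity)]
  refine (mul_le_mul_of_nonneg_left h3 (by positivity)).trans_eq ?_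
  have := (vb_pos (D := D)).ne'
  simp only [Real.norm_eq_abs, smul_eq_mul]
  generalize ∫ y in Metric.closedBall x r, |v y - v x| = I
  rw [inv_pow]
  field_simp

lemma abs_moll_le {v : Spc D → ℝ} (hv : MemLp v 2 volume) (hD : 0 < D) {S : ℝ}
    (hS : ∀ x, |P.η x| ≤ S) (x : Spc D) {t : ℝ} (ht : 1 ≤ t) :
    |P.moll v t x| ≤ (√t)⁻¹ * ((∫ y, v y ^ 2) + S ^ 2 * vb D) := by
  have ht0 : 0 < t := by linarith
  have hst : 0 < √t := Real.sqrt_pos.2 ht0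
  have hvi : Integrable (fun y => v y ^ 2) := hv.integrable_sq
  let b : Spc D → ℝ := fun y => (√t)⁻¹ * v y ^ 2 +
    (Metric.closedBall x t).indicator (fun _ => √t * (t⁻¹ ^ D * S) ^ 2) y
  have hbi : Integrable ((Metric.closedBall x t).indicator
      (fun _ : Spc D => √t * (t⁻¹ ^ D * S) ^ 2)) := by
    rw [integrable_indicator_iff measurableSet_closedBall]
    exact integrableOn_const measure_closedBall_lt_top.ne
  have h1 : ‖P.moll v t x‖ ≤ ∫ y, b y := by
    refine norm_integral_le_of_norm_le ((hvi.const_mul _).add hbi) (ae_of_all _ fun y => ?_)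
    by_cases hy : y ∈ Metric.closedBall x t
    · simp only [b, indicator_of_mem hy, norm_mul, Real.norm_eq_abs]
      have hη : |t⁻¹ ^ D| * |P.η (t⁻¹ • (x - y))| ≤ t⁻¹ ^ D * S := by
        rw [abs_of_nonneg (by positivity)]
        gcongr
        exact hS _
      refine (mul_le_mul_of_nonneg_left hη (abs_nonneg _)).trans ?_
      generalize t⁻¹ ^ D * S = a
      -- arithmetic-geometric mean with weight `√t`
      have h2 : 0 ≤ (√t)⁻¹ * (|v y| - √t * a) ^ 2 := by positivity
      have h3 : (√t)⁻¹ * (|v y| - √t * a) ^ 2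
          = (√t)⁻¹ * v y ^ 2 + √t * a ^ 2 - 2 * (|v y| * a) := by
        rw [sub_sq, sq_abs]
        field_simp
        ring
      have h4 : 0 ≤ (√t)⁻¹ * v y ^ 2 + √t * a ^ 2 := by positivity
      linarith
    · simp only [b, indicator_of_notMem hy, P.bη.dilate_zero ht0 hy]
      simp only [mul_zero, norm_zero, add_zero]
      positivity
  rw [← Real.norm_eq_abs]
  refine h1.trans ?_
  simp only [b]
  rw [integral_add (hvi.const_mul _) hbi, integral_const_mul,
    integral_indicator measurableSet_closedBall, setIntegral_const, vol_closedBall _ ht0.le,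
    mul_add]
  gcongr
  rw [smul_eq_mul]
  have h5 : t ≤ t ^ D := le_self_pow₀ ht hD.ne'
  have h6 : t ^ D * vb D * (√t * (t⁻¹ ^ D * S) ^ 2) = (√t * t⁻¹ ^ D) * (S ^ 2 * vb D) := by
    simp only [inv_pow]
    field_simp
  rw [h6]
  have := (vb_pos (D := D)).le
  gcongr
  calc √t * t⁻¹ ^ D ≤ √t * t⁻¹ := by
        gcongr
        rw [inv_pow]
        gcongr
    _ = (√t)⁻¹ := by
        rw [← div_eq_mul_inv, div_eq_iff ht0.ne', ← div_eq_inv_mul, Real.div_sqrt]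

lemma tendsto_moll_zero {v : Spc D → ℝ} (hv : MemLp v 2 volume) (hD : 0 < D) (x : Spc D) :
    Tendsto (fun t => P.moll v t x) atTop (𝓝 0) := by
  obtain ⟨S, hS0, hS⟩ := P.bη.exists_bound
  refine squeeze_zero_norm' ?_ (by
    simpa using (Real.tendsto_sqrt_atTop.inv_tendsto_atTop.mul_const
      ((∫ y, v y ^ 2) + S ^ 2 * vb D)))
  filter_upwards [eventually_ge_atTop 1] with t ht
  exact P.abs_moll_le hv hD hS x ht

/-- The mollification of a solution does not depend on the scale as long as it does not see the
data. -/
lemma moll_const {v g : Spc D → ℝ} {j k : Fin D} (hv : LocallyIntegrable v volume)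
    (hs : WeakSol g v j k) {x : Spc D} {R : ℝ} (hg : ∀ y ∈ Metric.closedBall x R, g y = 0)
    {s : ℝ} (hs0 : 0 < s) (hsR : s ≤ R) : P.moll v R x = P.moll v s x := by
  have hd : ∀ r ∈ Icc s R, HasDerivAt (fun r => P.moll v r x) 0 r := by
    intro r hr
    have hr0 : 0 < r := hs0.trans_le hr.1
    convert P.hasDerivAt_moll hv hs x hr0 using 1
    have : ∀ y, g y * pd j (fun z => pd k P.ψ z) (r⁻¹ • (x - y)) = 0 := by
      intro y
      by_cases hy : y ∈ Metric.closedBall x r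
      · rw [hg y (Metric.closedBall_subset_closedBall hr.2 hy), zero_mul]
      · rw [((P.bψ.pd k).pd j).dilate_zero hr0 hy, mul_zero]
    simp [this]
  exact constant_of_has_deriv_right_zero
    (fun r hr => (hd r hr).continuousAt.continuousWithinAt)
    (fun r hr => (hd r ⟨hr.1, hr.2.le⟩).hasDerivWithinAt) R ⟨hsR, le_rfl⟩

/-- Mean value property on the set where the data vanish nearby. -/
lemma ae_eq_moll {v g : Spc D → ℝ} {j k : Fin D} (hv : LocallyIntegrable v volume)
    (hs : WeakSol g v j k) {R : ℝ} (hR : 0 < R) :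
    ∀ᵐ x, (∀ y ∈ Metric.closedBall x R, g y = 0) → v x = P.moll v R x := by
  filter_upwards [P.ae_tendsto_moll hv] with x hx hg
  refine tendsto_nhds_unique hx (tendsto_const_nhds.congr' ?_)
  filter_upwards [Ioc_mem_nhdsGT hR] with s hs'
  exact P.moll_const hv hs hg hs'.1 hs'.2

/-- Mollifications about two centers. Their difference tends to `0` at infinite scale because `v` is
square integrable, and its derivative in the scale is bounded by `K/r²` with
`K = 2MLω‖x - c‖`, `ω` the volume of the unit ball; integrate from `a` to `∞`. -/
lemma abs_moll_sub_le {v g : Spc D → ℝ} {j k : Fin D} (hD : 0 < D) (hv : MemLp v 2 volume)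
    (hs : WeakSol g v j k) (hgm : LocallyIntegrable g volume) {M : ℝ} (hM : ∀ y, |g y| ≤ M)
    {L : ℝ} (hL0 : 0 ≤ L) (hL : ∀ x y, |pd j (fun z => pd k P.ψ z) x
      - pd j (fun z => pd k P.ψ z) y| ≤ L * ‖x - y‖) (x c : Spc D) {a : ℝ} (ha : 0 < a) :
    |P.moll v a x - P.moll v a c| ≤ 2 * M * L * vb D * ‖x - c‖ * a⁻¹ := by
  have hvl : LocallyIntegrable v volume := hv.locallyIntegrable (by norm_num)
  have hM0 : 0 ≤ M := (abs_nonneg _).trans (hM 0)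
  set K := 2 * M * L * vb D * ‖x - c‖ with hK
  have hK0 : 0 ≤ K := by
    have := (vb_pos (D := D)).le
    positivity
  set F : ℝ → ℝ := fun r => P.moll v r x - P.moll v r c with hF
  let I : Spc D → ℝ → ℝ := fun x r =>
    ∫ y, g y * pd j (fun z => pd k P.ψ z) (r⁻¹ • (x - y))
  have hd : ∀ r, 0 < r → HasDerivAt F (-(r⁻¹ ^ (D + 1) * (I x r - I c r))) r := by
    intro r hr
    refine ((P.hasDerivAt_moll hvl hs x hr).sub (P.hasDerivAt_moll hvl hs c hr)).congr_deriv ?_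
    simp only [I]; ring
  have hb : ∀ r, 0 < r → ‖-(r⁻¹ ^ (D + 1) * (I x r - I c r))‖ ≤ K * (r ^ 2)⁻¹ := by
    intro r hr
    have hsm : MeasurableSet (Metric.closedBall x r ∪ Metric.closedBall c r) :=
      measurableSet_closedBall.union measurableSet_closedBall
    have hsc : IsCompact (Metric.closedBall x r ∪ Metric.closedBall c r) :=
      (isCompact_closedBall x r).union (isCompact_closedBall c r)
    have h1 := ((P.bψ.pd k).pd j).abs_integral_sub_le hL0 hL hgm hr x c hsm
      (hgm.integrableOn_isCompact hsc) subset_union_left subset_union_right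
    have h2 : ∫ y in Metric.closedBall x r ∪ Metric.closedBall c r, |g y|
        ≤ M * (2 * (r ^ D * vb D)) := by
      calc ∫ y in Metric.closedBall x r ∪ Metric.closedBall c r, |g y|
          ≤ ∫ y in Metric.closedBall x r ∪ Metric.closedBall c r, M :=
            setIntegral_mono (hgm.integrableOn_isCompact hsc).abs
              (integrableOn_const hsc.measure_lt_top.ne) hM
        _ = volume.real (Metric.closedBall x r ∪ Metric.closedBall c r) * M := by
            rw [setIntegral_const, smul_eq_mul]
        _ ≤ (r ^ D * vb D + r ^ D * vb D) * M := by
            gcongr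
            refine (measureReal_union_le _ _).trans_eq ?_
            rw [vol_closedBall _ hr.le, vol_closedBall _ hr.le]
        _ = _ := by ring
    rw [norm_neg, norm_mul, Real.norm_of_nonneg (by positivity : 0 ≤ r⁻¹ ^ (D + 1)),
      Real.norm_eq_abs]
    calc r⁻¹ ^ (D + 1) * |I x r - I c r|
        ≤ r⁻¹ ^ (D + 1) * (L * (r⁻¹ * ‖x - c‖) * (M * (2 * (r ^ D * vb D)))) := by
          refine mul_le_mul_of_nonneg_left (h1.trans ?_) (by positivity)
          gcongr
      _ = K * (r ^ 2)⁻¹ := by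
          rw [hK, pow_succ, inv_pow]
          field_simp
  have hbd : ∀ t, a ≤ t → |F t - F a| ≤ K * a⁻¹ := by
    intro t hat
    have h1 := image_norm_le_of_norm_deriv_right_le_deriv_boundary' (f := fun r => F r - F a)
      (f' := fun r => -(r⁻¹ ^ (D + 1) * (I x r - I c r))) (a := a) (b := t)
      (B := fun r => K * (a⁻¹ - r⁻¹)) (B' := fun r => K * (r ^ 2)⁻¹)
      (fun r hr => ((hd r (ha.trans_le hr.1)).continuousAt.sub
        continuousAt_const).continuousWithinAt)
      (fun r hr => ((hd r (ha.trans_le hr.1)).sub_const _).hasDerivWithinAt)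
      (by simp)
      (fun r hr => (continuousAt_const.mul (continuousAt_const.sub
        (continuousAt_inv₀ (ha.trans_le hr.1).ne'))).continuousWithinAt)
      (fun r hr => by
        refine HasDerivAt.hasDerivWithinAt ?_
        have := ((hasDerivAt_inv (ha.trans_le hr.1).ne').const_sub a⁻¹).const_mul K
        simpa using this)
      (fun r hr => hb r (ha.trans_le hr.1)) (x := t) ⟨hat, le_rfl⟩
    refine h1.trans (mul_le_mul_of_nonneg_left ?_ hK0)
    have : 0 < t⁻¹ := inv_pos.2 (ha.trans_le hat)
    linarith
  have hlim : Tendsto (fun t => |F t - F a|) atTop (𝓝 |0 - F a|) := by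
    have h0 : Tendsto F atTop (𝓝 0) := by
      simpa using (P.tendsto_moll_zero hv hD x).sub (P.tendsto_moll_zero hv hD c)
    exact (h0.sub tendsto_const_nhds).abs
  have := le_of_tendsto hlim (by
    filter_upwards [eventually_ge_atTop a] with t ht
    exact hbd t ht)
  simpa using this

/-- A square integrable solution whose data vanish on the ball `B(c,R)` is almost constant well
inside it: there it equals its mollification at scale `R/2`, to which `abs_moll_sub_le` applies. -/
lemma far_estimate (P : MollPair D) (hD : 0 < D) (j k : Fin D) : ∃ C : ℝ, 0 ≤ C ∧ ∀ (v g : Spc D → ℝ),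
    MemLp v 2 volume → WeakSol g v j k → LocallyIntegrable g volume → ∀ M : ℝ, (∀ y, |g y| ≤ M) →
    ∀ (c : Spc D) (ρ R : ℝ), 0 < ρ → 2 * ρ ≤ R → (∀ y ∈ Metric.ball c R, g y = 0) →
    ∃ κ : ℝ, ∀ᵐ x, x ∈ Metric.ball c ρ → |v x - κ| ≤ C * M * (ρ / R) := by
  obtain ⟨L, hL0, hL⟩ := ((P.bψ.pd k).pd j).exists_lipschitz
  have hvb := (vb_pos (D := D)).le
  refine ⟨4 * L * vb D, by positivity, ?_⟩
  intro v g hv hs hgm M hM c ρ R hρ hR hg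
  have hM0 : 0 ≤ M := (abs_nonneg _).trans (hM 0)
  have hR0 : 0 < R := by linarith
  refine ⟨P.moll v (R / 2) c, ?_⟩
  filter_upwards [P.ae_eq_moll (hv.locallyIntegrable (by norm_num)) hs (half_pos hR0)] with x hx hxc
  rw [Metric.mem_ball] at hxc
  rw [hx (fun y hy => hg y (by
    rw [Metric.mem_closedBall] at hy
    rw [Metric.mem_ball]
    have := dist_triangle y x c
    linarith))]
  refine (P.abs_moll_sub_le hD hv hs hgm hM hL0 hL x c (half_pos hR0)).trans ?_
  rw [dist_eq_norm] at hxc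
  calc 2 * M * L * vb D * ‖x - c‖ * (R / 2)⁻¹ ≤ 2 * M * L * vb D * ρ * (R / 2)⁻¹ := by gcongr
    _ = _ := by field_simp; ring

/-- Liouville: functions of bounded mean oscillation with vanishing distributional Laplacian are
constant. Such a function equals its mollifications at every scale `t`; moving the center by `‖x‖`
changes the one at scale `t` by at most a multiple of the mean oscillation times `‖x‖/t`. -/
lemma liouville (P : MollPair D) {q : Spc D → ℝ} {j k : Fin D} (hq : LocallyIntegrable q volume) {A : ℝ}
    (hA : ∀ (c : Spc D) (r : ℝ), 0 < r →
      ⨍ y in Metric.ball c r, |q y - ⨍ z in Metric.ball c r, q z| ≤ A)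
    (hs : WeakSol (fun _ => 0) q j k) : ∃ c : ℝ, ∀ᵐ x, q x = c := by
  obtain ⟨L, hL0, hL⟩ := P.bη.exists_lipschitz
  have hconst : ∀ x t, 1 ≤ t → P.moll q t x = P.moll q 1 x := fun x t ht =>
    P.moll_const hq hs (fun _ _ => rfl) one_pos ht
  have hvb := vb_pos (D := D)
  refine ⟨P.moll q 1 0, ?_⟩
  filter_upwards [P.ae_eq_moll hq hs one_pos] with x hx
  rw [hx (fun _ _ => rfl), ← sub_eq_zero, ← abs_nonpos_iff]
  have hbd : ∀ t : ℝ, 1 ≤ t → ‖x‖ ≤ t →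
      |P.moll q 1 x - P.moll q 1 0| ≤ (3 ^ D * L * A * vb D * ‖x‖) * t⁻¹ := by
    intro t ht hxt
    have ht0 : 0 < t := by linarith
    rw [← hconst x t ht, ← hconst 0 t ht, moll_eq, moll_eq, ← mul_sub]
    set m := ⨍ z in Metric.ball (0 : Spc D) (3 * t), q z with hm
    have hqm : LocallyIntegrable (fun y => q y - m) volume := hq.sub (locallyIntegrable_const _)
    have hqi : IntegrableOn (fun y => q y - m) (Metric.ball (0 : Spc D) (3 * t)) :=
      (hqm.integrableOn_isCompact (isCompact_closedBall 0 (3 * t))).mono_set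
        Metric.ball_subset_closedBall
    have h1 := P.bη.abs_integral_sub_le hL0 hL hqm ht0 x 0 (measurableSet_ball) hqi
      (fun y hy => by
        rw [Metric.mem_closedBall] at hy
        rw [Metric.mem_ball]
        have := dist_triangle y x 0
        rw [dist_zero_right x] at this
        linarith)
      (Metric.closedBall_subset_ball (by linarith))
    rw [P.integral_sub_const hq m ht0, P.integral_sub_const hq m ht0, sub_sub_sub_cancel_right]
      at h1
    have h2 := hA 0 (3 * t) (by positivity)
    rw [setAverage_eq, ← hm, vol_ball _ (by positivity), smul_eq_mul,
      inv_mul_le_iff₀ (by positivity)] at h2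
    rw [abs_mul, abs_of_nonneg (by positivity : 0 ≤ t⁻¹ ^ D)]
    calc t⁻¹ ^ D * _ ≤ t⁻¹ ^ D * (L * (t⁻¹ * ‖x - 0‖) * ((3 * t) ^ D * vb D * A)) := by
          refine mul_le_mul_of_nonneg_left (h1.trans ?_) (by positivity)
          gcongr
      _ = _ := by
          rw [sub_zero, mul_pow, inv_pow]
          field_simp
  have hlim : Tendsto (fun t : ℝ => (3 ^ D * L * A * vb D * ‖x‖) * t⁻¹) atTop (𝓝 0) := by
    simpa using tendsto_inv_atTop_zero.const_mul (3 ^ D * L * A * vb D * ‖x‖)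
  refine ge_of_tendsto hlim ?_
  filter_upwards [eventually_ge_atTop 1, eventually_ge_atTop ‖x‖] with t h1 h2
  exact hbd t h1 h2

end MollPair

/-! ### Mean oscillation -/

/-- On every ball, `q` is within `A` of some constant in the mean. -/
def MeanClose (q : Spc D → ℝ) (A : ℝ) : Prop :=
  ∀ (c : Spc D) (r : ℝ), 0 < r →
    ∃ κ : ℝ, ∫ y in Metric.ball c r, |q y - κ| ≤ A * (r ^ D * vb D)

lemma integrableOn_ball {q : Spc D → ℝ} (hq : LocallyIntegrable q volume) (c : Spc D) (r : ℝ) :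
    IntegrableOn q (Metric.ball c r) :=
  (hq.integrableOn_isCompact (isCompact_closedBall c r)).mono_set Metric.ball_subset_closedBall

lemma integrableOn_ball_const (c : Spc D) (r κ : ℝ) :
    IntegrableOn (fun _ : Spc D => κ) (Metric.ball c r) :=
  integrableOn_const measure_ball_lt_top.ne

lemma integrableOn_abs_sub {q : Spc D → ℝ} (hq : LocallyIntegrable q volume) (c : Spc D)
    (r κ : ℝ) : IntegrableOn (fun y => |q y - κ|) (Metric.ball c r) :=
  ((integrableOn_ball hq c r).sub (integrableOn_ball_const c r κ)).abs

lemma integral_ball_const (c : Spc D) {r : ℝ} (hr : 0 < r) (κ : ℝ) :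
    ∫ _ in Metric.ball c r, κ = r ^ D * vb D * κ := by
  rw [setIntegral_const, vol_ball _ hr, smul_eq_mul]

lemma abs_average_sub_le {q : Spc D → ℝ} (hq : LocallyIntegrable q volume) {A κ : ℝ} (c : Spc D)
    {r : ℝ} (hr : 0 < r) (h : ∫ y in Metric.ball c r, |q y - κ| ≤ A * (r ^ D * vb D)) :
    |(⨍ y in Metric.ball c r, q y) - κ| ≤ A := by
  have hvb := vb_pos (D := D)
  have hV : 0 < r ^ D * vb D := by positivity
  have h1 : (⨍ y in Metric.ball c r, q y) - κ
      = (r ^ D * vb D)⁻¹ * ∫ y in Metric.ball c r, (q y - κ) := by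
    rw [integral_sub (integrableOn_ball hq c r) (integrableOn_ball_const c r κ),
      integral_ball_const c hr, setAverage_eq, vol_ball _ hr, smul_eq_mul]
    field_simp
  rw [h1, abs_mul, abs_of_nonneg (by positivity), inv_mul_le_iff₀ hV, mul_comm _ A]
  exact (abs_integral_le_integral_abs).trans h

lemma MeanClose.osc_le {q : Spc D → ℝ} (hq : LocallyIntegrable q volume) {A : ℝ}
    (h : MeanClose q A) (c : Spc D) (r : ℝ) (hr : 0 < r) :
    ⨍ y in Metric.ball c r, |q y - ⨍ z in Metric.ball c r, q z| ≤ 2 * A := by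
  obtain ⟨κ, hκ⟩ := h c r hr
  have h1 := abs_average_sub_le hq c hr hκ
  have hvb := vb_pos (D := D)
  set m := ⨍ z in Metric.ball c r, q z
  rw [setAverage_eq, vol_ball _ hr, smul_eq_mul, inv_mul_le_iff₀ (by positivity)]
  have hi := integrableOn_abs_sub hq c r
  calc ∫ y in Metric.ball c r, |q y - m|
      ≤ ∫ y in Metric.ball c r, (|q y - κ| + A) := by
        refine setIntegral_mono (hi m) ((hi κ).add (integrableOn_ball_const c r A)) fun y => ?_
        have h2 := abs_sub_le (q y) κ m
        rw [abs_sub_comm κ m] at h2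
        simp only
        linarith
    _ = (∫ y in Metric.ball c r, |q y - κ|) + r ^ D * vb D * A := by
        rw [integral_add (hi κ) (integrableOn_ball_const c r A), integral_ball_const c hr]
    _ ≤ _ := by linarith

lemma MeanClose.of_oscSet {q : Spc D → ℝ} (h : BddAbove (oscSet q)) : ∃ A, MeanClose q A := by
  obtain ⟨A, hA⟩ := h
  refine ⟨A, fun c r hr => ⟨⨍ z in Metric.ball c r, q z, ?_⟩⟩
  have h1 := hA ⟨c, r, hr, rfl⟩
  have hvb := vb_pos (D := D)
  rw [setAverage_eq, vol_ball _ hr, smul_eq_mul, inv_mul_le_iff₀ (by positivity)] at h1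
  rwa [mul_comm] at h1

lemma MeanClose.sub {q q' : Spc D → ℝ} {A A' : ℝ} (hq : LocallyIntegrable q volume)
    (hq' : LocallyIntegrable q' volume) (h : MeanClose q A) (h' : MeanClose q' A') :
    MeanClose (fun x => q x - q' x) (A + A') := by
  intro c r hr
  obtain ⟨κ, hκ⟩ := h c r hr
  obtain ⟨κ', hκ'⟩ := h' c r hr
  refine ⟨κ - κ', ?_⟩
  have h1 := integrableOn_abs_sub hq c r κ
  have h2 := integrableOn_abs_sub hq' c r κ'
  rw [add_mul]
  refine le_trans ?_ (add_le_add hκ hκ')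
  rw [← integral_add h1 h2]
  refine setIntegral_mono (integrableOn_abs_sub (hq.sub hq') c r _) (h1.add h2) fun y => ?_
  have h3 := abs_sub (q y - κ) (q' y - κ')
  simp only
  rwa [show q y - q' y - (κ - κ') = q y - κ - (q' y - κ') by ring]

lemma MeanClose.sub_const {q : Spc D → ℝ} {A : ℝ} (h : MeanClose q A) (a : ℝ) :
    MeanClose (fun x => q x - a) A := by
  intro c r hr
  obtain ⟨κ, hκ⟩ := h c r hr
  refine ⟨κ - a, ?_⟩
  simpa only [sub_sub_sub_cancel_right] using hκ

lemma memLp_indicator_ball {f : Spc D → ℝ} (hf : AEStronglyMeasurable f volume) {M : ℝ}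
    (hM : ∀ x, |f x| ≤ M) (c : Spc D) (r : ℝ) :
    MemLp ((Metric.ball c r).indicator f) 2 volume := by
  rw [memLp_indicator_iff_restrict measurableSet_ball]
  have : IsFiniteMeasure (volume.restrict (Metric.ball c r)) :=
    ⟨by rw [Measure.restrict_apply_univ]; exact measure_ball_lt_top⟩
  exact MemLp.of_bound hf.restrict M (ae_of_all _ hM)

lemma abs_indicator_le {f : Spc D → ℝ} {M : ℝ} (hM : ∀ x, |f x| ≤ M) (s : Set (Spc D))
    (x : Spc D) : |s.indicator f x| ≤ M := by
  by_cases hx : x ∈ s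
  · rw [indicator_of_mem hx]; exact hM x
  · rw [indicator_of_notMem hx, abs_zero]; exact (abs_nonneg _).trans (hM x)

/-- The BMO bound for square integrable solutions. Over the ball `B(c,ρ)` the data are split into
the part in `B(c,2ρ)`, whose solution is small by the `L²` bound, and the part away from it, whose
solution is almost constant on `B(c,ρ)`. -/
lemma exists_meanClose (hD : 0 < D) (j k : Fin D) : ∃ C : ℝ, 0 ≤ C ∧ ∀ (g u : Spc D → ℝ) (M : ℝ),
    0 < M → (∀ x, |g x| ≤ M) → MemLp g 2 volume → MemLp u 2 volume → DistSolJK D g u j k →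
    MeanClose u (C * M) := by
  obtain ⟨P⟩ := exists_mollPair hD
  obtain ⟨C, hC0, hC⟩ := P.far_estimate hD j k
  have hvb := vb_pos (D := D)
  refine ⟨C / 2 + (2 ^ D + 1) / 2, by positivity, ?_⟩
  intro g u M hM0 hM hg hu hs c ρ hρ
  have hg1 : MemLp ((Metric.ball c (2 * ρ)).indicator g) 2 volume := hg.indicator measurableSet_ball
  obtain ⟨v, hv, hvs, hvn⟩ := exists_L2_sol j k _ hg1
  have hl : ∀ {w : Spc D → ℝ}, MemLp w 2 volume → LocallyIntegrable w volume :=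
    fun h => h.locallyIntegrable (by norm_num)
  have hfar := hC (fun x => u x - v x) (fun x => g x - (Metric.ball c (2 * ρ)).indicator g x)
    (hu.sub hv) (hs.weakSol.sub hvs.weakSol (hl hg) (hl hg1) (hl hu) (hl hv))
    ((hl hg).sub (hl hg1)) M (fun y => by
      by_cases hy : y ∈ Metric.ball c (2 * ρ)
      · rw [indicator_of_mem hy, sub_self, abs_zero]; exact hM0.le
      · rw [indicator_of_notMem hy, sub_zero]; exact hM y) c ρ (2 * ρ) hρ le_rfl
      (fun y hy => by rw [indicator_of_mem hy, sub_self])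
  obtain ⟨κ, hκ⟩ := hfar
  refine ⟨κ, ?_⟩
  have hve : Integrable (fun y => v y ^ 2) := hv.integrable_sq
  have h1 : ∫ y in Metric.ball c ρ, |u y - κ|
      ≤ ∫ y in Metric.ball c ρ, ((2 * M)⁻¹ * v y ^ 2 + (M / 2 + C * M / 2)) := by
    refine setIntegral_mono_on_ae
      (integrableOn_abs_sub (hl hu) c ρ κ)
      ((hve.integrableOn.const_mul _).add (integrableOn_ball_const c ρ _)) measurableSet_ball ?_
    filter_upwards [hκ] with y hy hyb
    have h2 := hy hyb
    have h3 : C * M * (ρ / (2 * ρ)) = C * M / 2 := by field_simp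
    rw [h3] at h2
    have h4 : |v y| ≤ (2 * M)⁻¹ * v y ^ 2 + M / 2 := by
      have h5 : 0 ≤ (2 * M)⁻¹ * (|v y| - M) ^ 2 := by positivity
      have h6 : (2 * M)⁻¹ * (|v y| - M) ^ 2 = (2 * M)⁻¹ * v y ^ 2 + M / 2 - |v y| := by
        rw [sub_sq, sq_abs]
        field_simp
        ring
      linarith
    have h7 := abs_add_le (u y - v y - κ) (v y)
    rw [show u y - v y - κ + v y = u y - κ by ring] at h7
    linarith
  have h2 : ∫ y in Metric.ball c ρ, v y ^ 2 ≤ M ^ 2 * ((2 * ρ) ^ D * vb D) := by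
    calc ∫ y in Metric.ball c ρ, v y ^ 2 ≤ ∫ y, v y ^ 2 :=
          setIntegral_le_integral hve (ae_of_all _ fun _ => sq_nonneg _)
      _ ≤ ∫ y, (Metric.ball c (2 * ρ)).indicator g y ^ 2 := hvn
      _ ≤ ∫ y, (Metric.ball c (2 * ρ)).indicator (fun _ => M ^ 2) y := by
          refine integral_mono hg1.integrable_sq
            ((integrable_indicator_iff measurableSet_ball).2 (integrableOn_ball_const _ _ _))
            fun y => ?_
          by_cases hy : y ∈ Metric.ball c (2 * ρ)
          · simp only [indicator_of_mem hy]
            exact sq_le_sq' (abs_le.1 (hM y)).1 (abs_le.1 (hM y)).2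
          · simp [indicator_of_notMem hy]
      _ = _ := by
          rw [integral_indicator measurableSet_ball, integral_ball_const _ (by positivity)]
          ring
  rw [integral_add (hve.integrableOn.const_mul _) (integrableOn_ball_const c ρ _),
    integral_const_mul, integral_ball_const c hρ] at h1
  have h3 : (2 * M)⁻¹ * ∫ y in Metric.ball c ρ, v y ^ 2
      ≤ (2 * M)⁻¹ * (M ^ 2 * ((2 * ρ) ^ D * vb D)) := by gcongr
  have h4 : (2 * M)⁻¹ * (M ^ 2 * ((2 * ρ) ^ D * vb D)) = M * 2 ^ D / 2 * (ρ ^ D * vb D) := by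
    rw [mul_pow]
    field_simp
  calc _ ≤ _ := h1
    _ ≤ M * 2 ^ D / 2 * (ρ ^ D * vb D) + ρ ^ D * vb D * (M / 2 + C * M / 2) := by linarith
    _ = _ := by ring

/-- Functions of bounded mean oscillation grow at most polynomially in the mean. -/
lemma MeanClose.integral_ball_le {q : Spc D → ℝ} (hq : LocallyIntegrable q volume) {A : ℝ}
    (hA0 : 0 ≤ A) (h : MeanClose q A) (h0 : |∫ y in Metric.ball 0 1, q y| ≤ A * vb D) {R : ℝ}
    (hR : 1 ≤ R) : ∫ y in Metric.ball 0 R, |q y| ≤ 3 * A * vb D * R ^ (2 * D) := by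
  have hR0 : 0 < R := by linarith
  have hvb := vb_pos (D := D)
  obtain ⟨κ, hκ⟩ := h 0 R hR0
  have hi := integrableOn_abs_sub hq 0 R κ
  have h1 : |κ| ≤ 2 * A * R ^ D := by
    have h2 : vb D * κ = (∫ y in Metric.ball (0 : Spc D) 1, q y)
        - ∫ y in Metric.ball (0 : Spc D) 1, (q y - κ) := by
      rw [integral_sub (integrableOn_ball hq 0 1) (integrableOn_ball_const 0 1 κ),
        integral_ball_const _ one_pos]
      simp
    have h3 : |∫ y in Metric.ball (0 : Spc D) 1, (q y - κ)| ≤ A * (R ^ D * vb D) := by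
      refine (abs_integral_le_integral_abs).trans (le_trans ?_ hκ)
      exact setIntegral_mono_set hi (ae_of_all _ fun _ => abs_nonneg _)
        (Metric.ball_subset_ball hR).eventuallyLE
    have h4 : vb D * |κ| ≤ A * vb D + A * (R ^ D * vb D) := by
      rw [← abs_of_pos hvb, ← abs_mul, h2, abs_of_pos hvb]
      exact (abs_sub _ _).trans (add_le_add h0 h3)
    have h5 : 1 ≤ R ^ D := one_le_pow₀ hR
    refine le_of_mul_le_mul_left (h4.trans ?_) hvb
    nlinarith [mul_le_mul_of_nonneg_left h5 (mul_nonneg hA0 hvb.le)]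
  calc ∫ y in Metric.ball 0 R, |q y| ≤ ∫ y in Metric.ball 0 R, (|q y - κ| + 2 * A * R ^ D) := by
        refine setIntegral_mono (integrableOn_ball hq 0 R).abs
          (hi.add (integrableOn_ball_const 0 R _)) fun y => ?_
        have := abs_add_le (q y - κ) κ
        rw [sub_add_cancel] at this
        simp only at *
        linarith
    _ = (∫ y in Metric.ball 0 R, |q y - κ|) + R ^ D * vb D * (2 * A * R ^ D) := by
        rw [integral_add hi (integrableOn_ball_const 0 R _), integral_ball_const _ hR0]
    _ ≤ A * (R ^ D * vb D) * R ^ D + R ^ D * vb D * (2 * A * R ^ D) := by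
        gcongr
        exact hκ.trans (le_mul_of_one_le_right (by positivity) (one_le_pow₀ hR))
    _ = _ := by ring

/-- The polynomial weight `(1+|x|)^{-(2D+2)}`. -/
def wt (x : Spc D) : ℝ := ((1 + ‖x‖) ^ (2 * D + 2))⁻¹

lemma wt_nonneg (x : Spc D) : 0 ≤ wt x := by unfold wt; positivity

lemma continuous_wt : Continuous (wt (D := D)) := by
  unfold wt
  exact Continuous.inv₀ (by fun_prop) fun x => by positivity

/-- Weighted integrability of functions of bounded mean oscillation, by summing over the balls of
integer radius. -/
lemma exists_weighted (D : ℕ) : ∃ C : ℝ, 0 ≤ C ∧ ∀ (q : Spc D → ℝ) (A : ℝ),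
    LocallyIntegrable q volume → 0 ≤ A → MeanClose q A →
    |∫ y in Metric.ball 0 1, q y| ≤ A * vb D →
    Integrable (fun x => |q x| * wt x) ∧ ∫ x, |q x| * wt x ≤ C * A := by
  have hvb := vb_pos (D := D)
  have hsum : Summable (fun n : ℕ => (((n : ℝ) + 1) ^ 2)⁻¹) := by
    have := (summable_nat_add_iff 1).2 (Real.summable_nat_pow_inv.2 (one_lt_two))
    simpa using this
  set Z := ∑' n : ℕ, (((n : ℝ) + 1) ^ 2)⁻¹ with hZ
  have hZ0 : 0 ≤ Z := tsum_nonneg fun n => by positivity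
  refine ⟨3 * vb D * Z, by positivity, ?_⟩
  intro q A hq hA0 hA h0
  let F : ℕ → Spc D → ENNReal := fun n => (Metric.ball (0 : Spc D) (n + 1)).indicator
    fun x => ENNReal.ofReal (|q x| * (((n : ℝ) + 1) ^ (2 * D + 2))⁻¹)
  have hqm : AEStronglyMeasurable q volume := hq.aestronglyMeasurable
  have hFm : ∀ n, AEMeasurable (F n) volume := fun n =>
    (ENNReal.measurable_ofReal.comp_aemeasurable
      (hqm.norm.aemeasurable.mul_const _)).indicator measurableSet_ball
  have hFi : ∀ n, ∫⁻ x, F n x ≤ ENNReal.ofReal (3 * A * vb D * (((n : ℝ) + 1) ^ 2)⁻¹) := by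
    intro n
    have hn : (1 : ℝ) ≤ (n : ℝ) + 1 := by
      have : (0 : ℝ) ≤ n := n.cast_nonneg
      linarith
    rw [lintegral_indicator measurableSet_ball, ← ofReal_integral_eq_lintegral_ofReal
      ((integrableOn_ball hq 0 _).abs.mul_const _) (ae_of_all _ fun x => by positivity)]
    refine ENNReal.ofReal_le_ofReal ?_
    rw [integral_mul_const]
    refine (mul_le_mul_of_nonneg_right (hA.integral_ball_le hq hA0 h0 hn)
      (by positivity)).trans_eq ?_
    rw [pow_add]
    field_simp
  have hle : ∫⁻ x, ENNReal.ofReal (|q x| * wt x) ≤ ENNReal.ofReal (3 * vb D * Z * A) := by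
    calc ∫⁻ x, ENNReal.ofReal (|q x| * wt x) ≤ ∫⁻ x, ∑' n, F n x := by
          refine lintegral_mono fun x => ?_
          refine le_trans ?_ (ENNReal.le_tsum ⌊‖x‖⌋₊)
          have hx : x ∈ Metric.ball (0 : Spc D) (⌊‖x‖⌋₊ + 1) := by
            rw [mem_ball_zero_iff]
            exact Nat.lt_floor_add_one _
          simp only [F, indicator_of_mem hx]
          refine ENNReal.ofReal_le_ofReal (mul_le_mul_of_nonneg_left ?_ (abs_nonneg _))
          unfold wt
          have := Nat.floor_le (norm_nonneg x)
          rw [add_comm 1]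
          gcongr
      _ = ∑' n, ∫⁻ x, F n x := lintegral_tsum hFm
      _ ≤ ∑' n : ℕ, ENNReal.ofReal (3 * A * vb D * (((n : ℝ) + 1) ^ 2)⁻¹) :=
          ENNReal.tsum_le_tsum hFi
      _ = ENNReal.ofReal (3 * vb D * Z * A) := by
          rw [← ENNReal.ofReal_tsum_of_nonneg (fun n => by positivity) (hsum.mul_left _),
            tsum_mul_left]
          congr 1
          ring
  have hnn : 0 ≤ᵐ[volume] fun x => |q x| * wt x :=
    ae_of_all _ fun x => mul_nonneg (abs_nonneg _) (wt_nonneg x)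
  have hmeas : AEStronglyMeasurable (fun x => |q x| * wt x) volume :=
    hqm.norm.mul continuous_wt.aestronglyMeasurable
  refine ⟨⟨hmeas, ?_⟩, ?_⟩
  · rw [hasFiniteIntegral_iff_ofReal hnn]
    exact hle.trans_lt ENNReal.ofReal_lt_top
  · rw [integral_eq_lintegral_of_nonneg_ae hnn hmeas]
    exact ENNReal.toReal_le_of_le_ofReal (by positivity) hle

/-! ### Passage to the limit -/

lemma integral_pdS (j : Fin D) (φ : 𝓢(Spc D, ℝ)) : ∫ x, pdS j φ x = 0 := by
  have h := integral_mul_fderiv_eq_neg_fderiv_mul_of_integrable (μ := (volume : Measure (Spc D)))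
    (f := fun _ => (1 : ℝ)) (g := ⇑φ) (v := EuclideanSpace.single j (1 : ℝ)) (by simp)
    (by
      have h := (pdS j φ).integrable (μ := volume)
      rw [coe_pdS] at h
      simp only [one_mul]
      exact h) (by simpa using φ.integrable)
    (fun _ _ => by fun_prop) (fun _ _ => φ.differentiableAt)
  simpa [coe_pdS, pd] using h

lemma integral_lapS (φ : 𝓢(Spc D, ℝ)) : ∫ x, lapS φ x = 0 := by
  simp only [lapS, _root_.sum_apply]
  rw [integral_finsetSum _ fun i _ => (pdS i (pdS i φ)).integrable]
  exact Finset.sum_eq_zero fun i _ => integral_pdS i _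

lemma schwartz_decay (φ : 𝓢(Spc D, ℝ)) :
    ∃ S : ℝ, 0 ≤ S ∧ ∀ x, (1 + ‖x‖) * |φ x| ≤ S * wt x := by
  refine ⟨2 ^ (2 * D + 3) * (Finset.Iic ((2 * D + 3, 0) : ℕ × ℕ)).sup
    (fun m => SchwartzMap.seminorm ℝ m.1 m.2) φ, by positivity, fun x => ?_⟩
  have h := SchwartzMap.one_add_le_sup_seminorm_apply (𝕜 := ℝ) (m := (2 * D + 3, 0))
    le_rfl le_rfl φ x
  rw [norm_iteratedFDeriv_zero, Real.norm_eq_abs] at h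
  unfold wt
  rw [← div_eq_mul_inv, le_div_iff₀ (by positivity)]
  refine le_trans (le_of_eq ?_) h
  simp only
  ring

lemma integrable_wt : Integrable (wt (D := D)) := by
  have h := integrable_one_add_norm (μ := (volume : Measure (Spc D))) (E := Spc D)
    (r := ((2 * D + 2 : ℕ) : ℝ)) (by
      rw [finrank_euclideanSpace_fin]; push_cast
      have : (0 : ℝ) ≤ D := D.cast_nonneg
      linarith)
  refine h.congr (ae_of_all _ fun x => ?_)
  simp only [wt]
  rw [Real.rpow_neg (by positivity), Real.rpow_natCast]

/-- A square integrable solution whose data are bounded by `M` and vanish on `B(0,m)` stays, on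
`B(0,ρ)`, within `C M ρ/m` of its mean value over `B(0,1)`. -/
lemma exists_close (hD : 0 < D) (j k : Fin D) : ∃ C : ℝ, 0 ≤ C ∧ ∀ (u g : Spc D → ℝ),
    MemLp u 2 volume → WeakSol g u j k → LocallyIntegrable g volume → ∀ M : ℝ, (∀ y, |g y| ≤ M) →
    ∀ (ρ m : ℝ), 1 ≤ ρ → 2 * ρ ≤ m → (∀ y ∈ Metric.ball (0 : Spc D) m, g y = 0) →
    ∀ᵐ x, x ∈ Metric.ball (0 : Spc D) ρ →
      |u x - ⨍ z in Metric.ball (0 : Spc D) 1, u z| ≤ C * M * (ρ / m) := by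
  obtain ⟨P⟩ := exists_mollPair hD
  obtain ⟨C, hC0, hC⟩ := P.far_estimate hD j k
  refine ⟨2 * C, by positivity, ?_⟩
  intro u g hu hs hg M hM ρ m hρ hm hg0
  obtain ⟨κ, hκ⟩ := hC u g hu hs hg M hM 0 ρ m (by linarith) hm hg0
  have hul : LocallyIntegrable u volume := hu.locallyIntegrable (by norm_num)
  have h1 : |(⨍ z in Metric.ball (0 : Spc D) 1, u z) - κ| ≤ C * M * (ρ / m) := by
    refine abs_average_sub_le hul 0 one_pos ?_
    calc ∫ y in Metric.ball (0 : Spc D) 1, |u y - κ|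
        ≤ ∫ y in Metric.ball (0 : Spc D) 1, C * M * (ρ / m) := by
          refine setIntegral_mono_on_ae (integrableOn_abs_sub hul 0 1 κ)
            (integrableOn_ball_const 0 1 _) measurableSet_ball ?_
          filter_upwards [hκ] with y hy hyb
          exact hy (Metric.ball_subset_ball hρ hyb)
      _ = _ := by rw [integral_ball_const _ one_pos, mul_comm]
  filter_upwards [hκ] with x hx hxb
  have h2 := abs_sub_le (u x) κ (⨍ z in Metric.ball (0 : Spc D) 1, u z)
  rw [abs_sub_comm κ] at h2
  have h3 := hx hxb
  calc _ ≤ _ := h2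
    _ ≤ C * M * (ρ / m) + C * M * (ρ / m) := add_le_add h3 h1
    _ = _ := by ring

/-- Passage to the limit: locally uniformly convergent sequences with a common mean oscillation
bound converge in the sense of tempered distributions. -/
lemma tendsto_integral_of_close {p : Spc D → ℝ} {q : ℕ → Spc D → ℝ} {A : ℝ} (hA0 : 0 ≤ A)
    (hp : LocallyIntegrable p volume) (hq : ∀ n, LocallyIntegrable (q n) volume)
    (hpA : MeanClose p A) (hqA : ∀ n, MeanClose (q n) A)
    (hp0 : |∫ y in Metric.ball 0 1, p y| ≤ A * vb D)
    (hq0 : ∀ n, |∫ y in Metric.ball 0 1, q n y| ≤ A * vb D)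
    (hc : ∀ᵐ x, ∀ ρ n : ℕ, 1 ≤ ρ → 2 * ρ ≤ n → x ∈ Metric.ball (0 : Spc D) ρ →
      |p x - q n x| ≤ A * ((ρ : ℝ) / n)) (φ : 𝓢(Spc D, ℝ)) :
    Tendsto (fun n => ∫ x, q n x * φ x) atTop (𝓝 (∫ x, p x * φ x)) := by
  obtain ⟨C, hC0, hC⟩ := exists_weighted D
  obtain ⟨S, hS0, hS⟩ := schwartz_decay φ
  obtain ⟨hpi, hpb⟩ := hC p A hp hA0 hpA hp0
  have hφ : ∀ x, |φ x| ≤ S * wt x := fun x =>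
    (le_mul_of_one_le_left (abs_nonneg _) (by linarith [norm_nonneg x])).trans (hS x)
  have hmul : ∀ {w : Spc D → ℝ}, LocallyIntegrable w volume → Integrable (fun x => |w x| * wt x) →
      Integrable (fun x => w x * φ x) := by
    intro w hw hwi
    refine (hwi.const_mul S).mono' (hw.aestronglyMeasurable.mul
      φ.continuous.aestronglyMeasurable) (ae_of_all _ fun x => ?_)
    rw [norm_mul, Real.norm_eq_abs, Real.norm_eq_abs]
    nlinarith [mul_le_mul_of_nonneg_left (hφ x) (abs_nonneg (w x))]
  set K : ℝ := S * (4 * (C * A + C * A) + 2 * A * ∫ x : Spc D, wt x) with hK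
  rw [tendsto_iff_norm_sub_tendsto_zero]
  have hlim : Tendsto (fun n : ℕ => K * ((n : ℝ))⁻¹) atTop (𝓝 0) := by
    simpa using tendsto_inv_atTop_nhds_zero_nat.const_mul K
  refine squeeze_zero' (Eventually.of_forall fun _ => norm_nonneg _) ?_ hlim
  filter_upwards [eventually_ge_atTop 1] with n hn
  have hn0 : (0 : ℝ) < n := by exact_mod_cast hn
  obtain ⟨hqi, hqb⟩ := hC (q n) A (hq n) hA0 (hqA n) (hq0 n)
  rw [← integral_sub (hmul (hq n) hqi) (hmul hp hpi)]
  have hbi : Integrable (fun x : Spc D => (S * (n : ℝ)⁻¹) *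
      (4 * (|p x| * wt x + |q n x| * wt x) + 2 * A * wt x)) :=
    ((((hpi.add hqi).const_mul 4)).add (integrable_wt.const_mul _)).const_mul _
  refine (norm_integral_le_of_norm_le hbi ?_).trans ?_
  · filter_upwards [hc] with x hx
    rw [← sub_mul, norm_mul, Real.norm_eq_abs, Real.norm_eq_abs, abs_sub_comm]
    have hw := wt_nonneg x
    -- the pointwise bound on the difference, near and far from the origin
    have key : |p x - q n x| ≤ (n : ℝ)⁻¹ * (4 * (|p x| + |q n x|) + 2 * A) * (1 + ‖x‖) := by
      by_cases hxn : 2 * (⌊‖x‖⌋₊ + 1) ≤ n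
      · have hb : x ∈ Metric.ball (0 : Spc D) ((⌊‖x‖⌋₊ + 1 : ℕ) : ℝ) := by
          rw [mem_ball_zero_iff]
          push_cast
          exact Nat.lt_floor_add_one _
        have h1 := hx (⌊‖x‖⌋₊ + 1) n (by omega) hxn hb
        have h2 := Nat.floor_le (norm_nonneg x)
        calc |p x - q n x| ≤ A * (((⌊‖x‖⌋₊ + 1 : ℕ) : ℝ) / n) := h1
          _ ≤ A * ((2 * (1 + ‖x‖)) / n) := by
              gcongr
              push_cast
              linarith [norm_nonneg x]
          _ = (n : ℝ)⁻¹ * (0 + 2 * A) * (1 + ‖x‖) := by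
              rw [div_eq_mul_inv]
              ring
          _ ≤ _ := by
              gcongr
              positivity
      · have h1 : (n : ℝ) ≤ 4 * (1 + ‖x‖) := by
          have h2 : (n : ℝ) ≤ ((2 * (⌊‖x‖⌋₊ + 1) : ℕ) : ℝ) := by
            exact_mod_cast (not_le.1 hxn).le
          push_cast at h2
          linarith [Nat.floor_le (norm_nonneg x), norm_nonneg x]
        have h2 : 1 ≤ (n : ℝ)⁻¹ * (4 * (1 + ‖x‖)) := by
          rw [← div_eq_inv_mul, le_div_iff₀ hn0]
          linarith
        calc |p x - q n x| ≤ |p x| + |q n x| := abs_sub _ _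
          _ ≤ (|p x| + |q n x|) * ((n : ℝ)⁻¹ * (4 * (1 + ‖x‖))) :=
              le_mul_of_one_le_right (by positivity) h2
          _ = (n : ℝ)⁻¹ * (4 * (|p x| + |q n x|) + 0) * (1 + ‖x‖) := by ring
          _ ≤ _ := by
              gcongr
              positivity
    calc |p x - q n x| * |φ x|
        ≤ (n : ℝ)⁻¹ * (4 * (|p x| + |q n x|) + 2 * A) * (1 + ‖x‖) * |φ x| := by gcongr
      _ = (n : ℝ)⁻¹ * (4 * (|p x| + |q n x|) + 2 * A) * ((1 + ‖x‖) * |φ x|) := by ring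
      _ ≤ (n : ℝ)⁻¹ * (4 * (|p x| + |q n x|) + 2 * A) * (S * wt x) := by
          exact mul_le_mul_of_nonneg_left (hS x) (by positivity)
      _ = _ := by ring
  · have hpq : Integrable (fun x : Spc D => |p x| * wt x + |q n x| * wt x) := hpi.add hqi
    rw [integral_const_mul, integral_add (hpq.const_mul 4) (integrable_wt.const_mul _),
      integral_const_mul, integral_const_mul, integral_add hpi hqi, hK]
    calc _ ≤ (S * (n : ℝ)⁻¹) * (4 * (C * A + C * A) + 2 * A * ∫ x : Spc D, wt x) := by gcongr
      _ = _ := by ring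

/-! ### Existence and uniqueness -/

lemma setIntegral_abs_sub_le {p q : Spc D → ℝ} (hp : LocallyIntegrable p volume)
    (hq : LocallyIntegrable q volume) {E : ℝ} (c : Spc D) {r : ℝ} (hr : 0 < r)
    (h : ∀ᵐ x, x ∈ Metric.ball c r → |p x - q x| ≤ E) :
    ∫ x in Metric.ball c r, |p x - q x| ≤ E * (r ^ D * vb D) := by
  rw [mul_comm, ← integral_ball_const c hr]
  exact setIntegral_mono_on_ae
    ((integrableOn_ball hp c r).sub (integrableOn_ball hq c r)).abs
    (integrableOn_ball_const c r E) measurableSet_ball h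

/-- Existence, for data bounded by `M > 0`: the solutions with data cut off to `B(0,n)`, normalized
to have mean zero over `B(0,1)`, converge locally uniformly, and mean oscillation bounds and the
equation pass to the limit. -/
lemma exists_sol (hD : 0 < D) (j k : Fin D) : ∃ C : ℝ, 0 ≤ C ∧ ∀ (f : Spc D → ℝ) (M : ℝ),
    AEStronglyMeasurable f volume → 0 < M → (∀ x, |f x| ≤ M) →
    ∃ p : Spc D → ℝ, LocallyIntegrable p volume ∧ MeanClose p (C * M) ∧ DistSolJK D f p j k := by
  obtain ⟨C₁, hC₁, hmc⟩ := exists_meanClose hD j k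
  obtain ⟨C₂, hC₂, hcl⟩ := exists_close hD j k
  have hvb := vb_pos (D := D)
  refine ⟨C₁ + C₂, by positivity, ?_⟩
  intro f M hf hM0 hM
  have hl : ∀ {w : Spc D → ℝ}, MemLp w 2 volume → LocallyIntegrable w volume :=
    fun h => h.locallyIntegrable (by norm_num)
  set F : ℕ → Spc D → ℝ := fun n => (Metric.ball (0 : Spc D) n).indicator f with hF
  have hF2 : ∀ n, MemLp (F n) 2 volume := fun n => memLp_indicator_ball hf hM 0 n
  have hFM : ∀ n x, |F n x| ≤ M := fun n x => abs_indicator_le hM _ x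
  choose u hu hus _hun using fun n => exists_L2_sol j k (F n) (hF2 n)
  set a : ℕ → ℝ := fun n => ⨍ z in Metric.ball (0 : Spc D) 1, u n z with ha
  set q : ℕ → Spc D → ℝ := fun n x => u n x - a n with hq
  have hql : ∀ n, LocallyIntegrable (q n) volume := fun n =>
    (hl (hu n)).sub (locallyIntegrable_const _)
  have hqc : ∀ n, MeanClose (q n) (C₁ * M) := fun n =>
    (hmc (F n) (u n) M hM0 (hFM n) (hF2 n) (hu n) (hus n)).sub_const _
  have hq0 : ∀ n, ∫ y in Metric.ball (0 : Spc D) 1, q n y = 0 := by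
    intro n
    rw [hq]
    simp only
    rw [integral_sub (integrableOn_ball (hl (hu n)) 0 1) (integrableOn_ball_const 0 1 _),
      integral_ball_const _ one_pos, ha]
    simp only
    rw [setAverage_eq, vol_ball _ one_pos, smul_eq_mul]
    field_simp
    ring
  have hcau : ∀ᵐ x, ∀ ρ m n : ℕ, 1 ≤ ρ → 2 * ρ ≤ m → m ≤ n → x ∈ Metric.ball (0 : Spc D) ρ →
      |q n x - q m x| ≤ C₂ * M * ((ρ : ℝ) / m) := by
    simp only [ae_all_iff]
    intro ρ m n hρ hm hmn
    have h := hcl (fun x => u n x - u m x) (fun x => F n x - F m x) ((hu n).sub (hu m))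
      ((hus n).weakSol.sub (hus m).weakSol (hl (hF2 n)) (hl (hF2 m)) (hl (hu n)) (hl (hu m)))
      ((hl (hF2 n)).sub (hl (hF2 m))) M (fun y => by
        simp only [hF]
        by_cases hy : y ∈ Metric.ball (0 : Spc D) m
        · rw [indicator_of_mem hy, indicator_of_mem
            (Metric.ball_subset_ball (by exact_mod_cast hmn) hy), sub_self, abs_zero]
          exact hM0.le
        · rw [indicator_of_notMem hy, sub_zero]
          exact hFM n y)
      ρ m (by exact_mod_cast hρ) (by exact_mod_cast hm) (fun y hy => by
        simp only [hF]
        rw [indicator_of_mem hy, indicator_of_mem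
            (Metric.ball_subset_ball (by exact_mod_cast hmn) hy), sub_self])
    filter_upwards [h] with x hx hxb
    have h1 := hx hxb
    have h2 : ⨍ z in Metric.ball (0 : Spc D) 1, (u n z - u m z) = a n - a m := by
      simp only [ha, setAverage_eq]
      rw [integral_sub (integrableOn_ball (hl (hu n)) 0 1) (integrableOn_ball (hl (hu m)) 0 1),
        smul_sub]
    rw [h2] at h1
    simp only [hq]
    rwa [show u n x - a n - (u m x - a m) = u n x - u m x - (a n - a m) by ring]
  set p : Spc D → ℝ := fun x => limUnder atTop (fun n => q n x) with hp
  have hlim : ∀ᵐ x, Tendsto (fun n => q n x) atTop (𝓝 (p x)) := by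
    filter_upwards [hcau] with x hx
    refine CauchySeq.tendsto_limUnder (Metric.cauchySeq_iff'.2 fun ε hε => ?_)
    set ρ := ⌊‖x‖⌋₊ + 1 with hρ
    have hxb : x ∈ Metric.ball (0 : Spc D) (ρ : ℝ) := by
      rw [mem_ball_zero_iff, hρ]
      push_cast
      exact Nat.lt_floor_add_one _
    obtain ⟨N, hN⟩ := exists_nat_gt (C₂ * M * ρ / ε)
    refine ⟨max N (2 * ρ), fun n hn => ?_⟩
    have hm0 : (0 : ℝ) < (max N (2 * ρ) : ℕ) := by
      have : 0 < max N (2 * ρ) := lt_max_of_lt_right (by omega)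
      exact_mod_cast this
    rw [Real.dist_eq]
    refine (hx ρ (max N (2 * ρ)) n (by omega) (le_max_right _ _) hn hxb).trans_lt ?_
    rw [← mul_div_assoc, div_lt_iff₀ hm0, mul_comm ε, ← div_lt_iff₀ hε]
    refine hN.trans_le ?_
    exact_mod_cast le_max_left _ _
  have hclose : ∀ᵐ x, ∀ ρ m : ℕ, 1 ≤ ρ → 2 * ρ ≤ m → x ∈ Metric.ball (0 : Spc D) ρ →
      |p x - q m x| ≤ C₂ * M * ((ρ : ℝ) / m) := by
    filter_upwards [hcau, hlim] with x hx hxl ρ m hρ hm hxb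
    refine le_of_tendsto ((hxl.sub tendsto_const_nhds).abs) ?_
    filter_upwards [eventually_ge_atTop m] with n hn
    exact hx ρ m n hρ hm hn hxb
  -- at scale `ρ` the index `2ρ` is already within a constant
  have hhalf : ∀ ρ : ℕ, 1 ≤ ρ → ∀ᵐ x, x ∈ Metric.ball (0 : Spc D) ρ →
      |p x - q (2 * ρ) x| ≤ C₂ * M := by
    intro ρ hρ
    filter_upwards [hclose] with x hx hxb
    refine (hx ρ (2 * ρ) hρ le_rfl hxb).trans ?_
    refine mul_le_of_le_one_right (by positivity) ?_
    rw [div_le_one (by positivity)]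
    push_cast
    linarith [(Nat.cast_nonneg ρ : (0 : ℝ) ≤ ρ)]
  have hpm : AEStronglyMeasurable p volume :=
    aestronglyMeasurable_of_tendsto_ae atTop (fun n => (hql n).aestronglyMeasurable) hlim
  have hpl : LocallyIntegrable p volume := by
    rw [locallyIntegrable_iff]
    intro K hK
    obtain ⟨r, hr⟩ := hK.isBounded.subset_ball (0 : Spc D)
    obtain ⟨ρ, hρ⟩ := exists_nat_gt (max r 1)
    have hρ1 : 1 ≤ ρ := by
      have : (1 : ℝ) < ρ := (le_max_right _ _).trans_lt hρ
      exact_mod_cast this.le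
    refine IntegrableOn.mono_set (t := Metric.ball (0 : Spc D) ρ) ?_
      (hr.trans (Metric.ball_subset_ball ((le_max_left _ _).trans hρ.le)))
    refine Integrable.mono' ((integrableOn_ball (hql (2 * ρ)) 0 ρ).abs.add
      (integrableOn_ball_const 0 ρ (C₂ * M))) hpm.restrict ?_
    rw [ae_restrict_iff' measurableSet_ball]
    filter_upwards [hhalf ρ hρ1] with x hx hxb
    have h1 := abs_add_le (p x - q (2 * ρ) x) (q (2 * ρ) x)
    rw [sub_add_cancel] at h1
    simp only [Pi.add_apply, Real.norm_eq_abs]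
    linarith [hx hxb]
  have hpc : MeanClose p ((C₁ + C₂) * M) := by
    intro c r hr
    obtain ⟨ρ, hρ⟩ := exists_nat_gt (max (r + ‖c‖) 1)
    have hρ1 : 1 ≤ ρ := by
      have : (1 : ℝ) < ρ := (le_max_right _ _).trans_lt hρ
      exact_mod_cast this.le
    have hsub : Metric.ball c r ⊆ Metric.ball (0 : Spc D) ρ :=
      Metric.ball_subset_ball' (by
        rw [dist_zero_right]
        exact (le_max_left _ _).trans hρ.le)
    obtain ⟨κ, hκ⟩ := hqc (2 * ρ) c r hr
    refine ⟨κ, ?_⟩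
    have h1 : ∫ x in Metric.ball c r, |p x - q (2 * ρ) x| ≤ C₂ * M * (r ^ D * vb D) := by
      refine setIntegral_abs_sub_le hpl (hql _) c hr ?_
      filter_upwards [hhalf ρ hρ1] with x hx hxb
      exact hx (hsub hxb)
    have hi1 : IntegrableOn (fun x => |p x - q (2 * ρ) x|) (Metric.ball c r) :=
      ((integrableOn_ball hpl c r).sub (integrableOn_ball (hql _) c r)).abs
    have hi2 := integrableOn_abs_sub (hql (2 * ρ)) c r κ
    calc ∫ x in Metric.ball c r, |p x - κ|
        ≤ ∫ x in Metric.ball c r, (|p x - q (2 * ρ) x| + |q (2 * ρ) x - κ|) :=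
          setIntegral_mono (integrableOn_abs_sub hpl c r κ) (hi1.add hi2)
            fun x => abs_sub_le _ _ _
      _ = _ := integral_add hi1 hi2
      _ ≤ C₂ * M * (r ^ D * vb D) + C₁ * M * (r ^ D * vb D) := add_le_add h1 hκ
      _ = _ := by ring
  have hp0 : |∫ y in Metric.ball (0 : Spc D) 1, p y| ≤ C₂ * M * vb D := by
    have h1 : ∫ x in Metric.ball (0 : Spc D) 1, |p x - q 2 x| ≤ C₂ * M * (1 ^ D * vb D) := by
      refine setIntegral_abs_sub_le hpl (hql _) 0 one_pos ?_
      filter_upwards [hhalf 1 le_rfl] with x hx hxb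
      exact hx (by simpa using hxb)
    have h2 : ∫ y in Metric.ball (0 : Spc D) 1, p y
        = ∫ y in Metric.ball (0 : Spc D) 1, (p y - q 2 y) := by
      rw [integral_sub (integrableOn_ball hpl 0 1) (integrableOn_ball (hql 2) 0 1), hq0, sub_zero]
    rw [h2]
    rw [one_pow, one_mul] at h1
    exact abs_integral_le_integral_abs.trans h1
  refine ⟨p, hpl, hpc, fun φ => ?_⟩
  have hmono : ∀ {w : Spc D → ℝ} {B B' : ℝ}, MeanClose w B → B ≤ B' → MeanClose w B' := by
    intro w B B' h hB c r hr
    obtain ⟨κ, hκ⟩ := h c r hr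
    exact ⟨κ, hκ.trans (by gcongr)⟩
  have hC₁M : 0 ≤ C₁ * M := by positivity
  have hC₂M : 0 ≤ C₂ * M := by positivity
  have hL := tendsto_integral_of_close (A := (C₁ + C₂) * M) (by positivity) hpl hql hpc
    (fun n => hmono (hqc n) (by linarith)) (hp0.trans (by gcongr; linarith))
    (fun n => by rw [hq0, abs_zero]; positivity)
    (by
      filter_upwards [hclose] with x hx ρ n hρ hn hxb
      refine (hx ρ n hρ hn hxb).trans ?_
      gcongr
      linarith) (lapS φ)
  have hR : Tendsto (fun n => ∫ x, F n x * pdS j (pdS k φ) x) atTop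
      (𝓝 (∫ x, f x * pdS j (pdS k φ) x)) := by
    refine tendsto_integral_of_dominated_convergence (fun x => M * |pdS j (pdS k φ) x|)
      (fun n => (hF2 n).1.mul (pdS j (pdS k φ)).continuous.aestronglyMeasurable)
      ((pdS j (pdS k φ)).integrable.abs.const_mul M)
      (fun n => ae_of_all _ fun x => ?_) (ae_of_all _ fun x => ?_)
    · rw [norm_mul, Real.norm_eq_abs, Real.norm_eq_abs]
      gcongr
      exact hFM n x
    · refine tendsto_const_nhds.congr' ?_
      obtain ⟨N, hN⟩ := exists_nat_gt ‖x‖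
      filter_upwards [eventually_ge_atTop N] with n hn
      have hxb : x ∈ Metric.ball (0 : Spc D) n := by
        rw [mem_ball_zero_iff]
        exact hN.trans_le (by exact_mod_cast hn)
      simp only [hF, indicator_of_mem hxb]
  have heq : ∀ n, -∫ x, q n x * lapS φ x = ∫ x, F n x * pdS j (pdS k φ) x := by
    intro n
    have h1 := hus n φ
    rw [← coe_lapS, ← coe_pdS_pdS] at h1
    rw [← h1]
    simp only [hq, sub_mul]
    have h2 : Integrable (fun x => u n x * lapS φ x) :=
      (hu n).integrable_mul ((lapS φ).memLp 2)
    rw [integral_sub h2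
      ((lapS φ).integrable.const_mul _), integral_const_mul, integral_lapS, mul_zero, sub_zero]
  rw [← coe_lapS, ← coe_pdS_pdS]
  exact tendsto_nhds_unique hL.neg (hR.congr fun n => (heq n).symm)

/-- Uniqueness up to constants: the difference of two solutions falls under the Liouville theorem. -/
lemma unique_sol (hD : 0 < D) {f : Spc D → ℝ} (hf : LocallyIntegrable f volume) {j k : Fin D}
    {p₁ p₂ : Spc D → ℝ} (h₁ : IsBMO p₁) (hs₁ : DistSolJK D f p₁ j k) (h₂ : IsBMO p₂)
    (hs₂ : DistSolJK D f p₂ j k) : ∃ c : ℝ, ∀ᵐ x, p₁ x = p₂ x + c := by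
  obtain ⟨P⟩ := exists_mollPair hD
  obtain ⟨A₁, hA₁⟩ := MeanClose.of_oscSet h₁.2
  obtain ⟨A₂, hA₂⟩ := MeanClose.of_oscSet h₂.2
  have hl : LocallyIntegrable (fun x => p₁ x - p₂ x) volume := h₁.1.sub h₂.1
  have hs := hs₁.weakSol.sub hs₂.weakSol hf hf h₁.1 h₂.1
  simp only [sub_self] at hs
  obtain ⟨c, hc⟩ := P.liouville hl ((hA₁.sub h₁.1 h₂.1 hA₂).osc_le hl) hs
  refine ⟨c, ?_⟩
  filter_upwards [hc] with x hx
  linarith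

lemma MeanClose.isBMO {p : Spc D → ℝ} (hp : LocallyIntegrable p volume) {A : ℝ}
    (h : MeanClose p A) : IsBMO p ∧ bmoNorm p ≤ 2 * A := by
  have hb : ∀ v ∈ oscSet p, v ≤ 2 * A := by
    rintro v ⟨c, r, hr, rfl⟩
    exact h.osc_le hp c r hr
  exact ⟨⟨hp, ⟨2 * A, hb⟩⟩, csSup_le ⟨_, 0, 1, one_pos, rfl⟩ hb⟩

end

/-- existence, BMO bound (with a constant depending only on `D`), and
uniqueness up to additive constants, of BMO distributional solutions of `-Δπ = ∂_j∂_k f`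
for `f ∈ L^∞(ℝ^D)`. -/
theorem stmt0 (D : ℕ) :
    ∃ C : ℝ, 0 < C ∧
      ∀ f : Spc D → ℝ, AEStronglyMeasurable f volume →
        BddAbove (Set.range fun x => |f x|) →
        ∀ j k : Fin D,
          (∃ p : Spc D → ℝ, IsBMO p ∧ DistSolJK D f p j k ∧
            bmoNorm p ≤ C * ⨆ x, |f x|) ∧
          (∀ p₁ p₂ : Spc D → ℝ,
            IsBMO p₁ → DistSolJK D f p₁ j k →
            IsBMO p₂ → DistSolJK D f p₂ j k →
            ∃ c : ℝ, ∀ᵐ x ∂(volume : Measure (Spc D)), p₁ x = p₂ x + c) := by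
  rcases Nat.eq_zero_or_pos D with rfl | hD
  · exact ⟨1, one_pos, fun _ _ _ j => j.elim0⟩
  choose C hC0 hC using exists_sol hD
  -- a constant serving all pairs of indices
  have hsum : ∀ j k, C j k ≤ ∑ a, ∑ b, C a b := fun j k =>
    (Finset.single_le_sum (f := fun b => C j b) (fun b _ => hC0 j b) (Finset.mem_univ k)).trans
      (Finset.single_le_sum (f := fun a => ∑ b, C a b)
        (fun a _ => Finset.sum_nonneg fun b _ => hC0 a b) (Finset.mem_univ j))
  have hS0 : 0 ≤ ∑ a, ∑ b, C a b :=
    Finset.sum_nonneg fun a _ => Finset.sum_nonneg fun b _ => hC0 a b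
  refine ⟨2 * (∑ a, ∑ b, C a b) + 1, by positivity, fun f hf hb j k => ?_⟩
  set M := ⨆ x, |f x| with hMdef
  have hM : ∀ x, |f x| ≤ M := fun x => le_ciSup hb x
  have hM0 : 0 ≤ M := (abs_nonneg _).trans (hM 0)
  have hfl : LocallyIntegrable f volume :=
    (locallyIntegrable_const M).mono hf (ae_of_all _ fun x => by
      rw [Real.norm_eq_abs, Real.norm_of_nonneg hM0]
      exact hM x)
  refine ⟨?_, fun p₁ p₂ h₁ hs₁ h₂ hs₂ => unique_sol hD hfl h₁ hs₁ h₂ hs₂⟩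
  rcases hM0.eq_or_lt with h0 | hpos
  · have hf0 : ∀ x, f x = 0 := fun x => by
      have := hM x
      rw [← h0] at this
      exact abs_nonpos_iff.1 this
    have hz : MeanClose (fun _ : Spc D => (0 : ℝ)) 0 := fun c r _ => ⟨0, by simp⟩
    obtain ⟨hz1, hz2⟩ := hz.isBMO (locallyIntegrable_const 0)
    refine ⟨fun _ => 0, hz1, fun φ => by simp [hf0], hz2.trans ?_⟩
    rw [← h0]
    simp
  · obtain ⟨p, hpl, hpc, hps⟩ := hC j k f M hf hpos hM
    obtain ⟨h1, h2⟩ := hpc.isBMO hpl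
    refine ⟨p, h1, hps, h2.trans ?_⟩
    nlinarith [hsum j k]

end
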